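/- arXiv:2405.00919 — 6 statements merged into one kernel-verified Lean document; each statement's English description precedes it below -/
import Mathlib

section
/- For every integer d ≥ 1, Σ_{j=0}^{d−1} sin(4π j² / d) = q(d). -/
/-!
The sum is the imaginary part of `G = ∑_{j < d} exp (4πi j² / d)`, which is evaluated, uniformly in
`d`, by the Landsberg–Schaar reciprocity with modulus `4`:
`G = (√d / 2) exp (πi / 4) H`, where `H = ∑_{j < 4} exp (-πi j² d / 4)`.

The reciprocity is read off from the behaviour of `θ(τ) = ∑_{n ∈ ℤ} exp (πi n² τ)` near the
rational points `4 / d` and `-d / 4`. If `n ↦ exp (πi n² r)` has period `N`, splitting `θ (r + σ)`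
into residue classes modulo `N` and applying the functional equation of the two-variable theta
function to each class expresses `(-i N² σ) ^ (1/2) θ (r + σ)` as a combination of theta values at
`-1 / (N² σ)` (`theta_split`), so that it tends to `∑_{j < N} exp (πi j² r)` when `Im (-1/σ) → ∞`
(`tendsto_theta`). With `τ = 4 / d + i / t` and `t → ∞`, the points `τ` and `-1 / τ` approach
`4 / d` and `-d / 4`, and `θ (τ) = (-iτ) ^ (-1/2) θ (-1/τ)` compares the two limits
(`gauss_reciprocity`).
-/

open scoped Real

/-- The value of the quadratic Gauss sum `Σ_j sin(4π j²/d)`, depending on `d mod 8`. -/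
noncomputable def q (d : ℕ) : ℝ :=
  if d % 8 = 7 then Real.sqrt d
  else if d % 8 = 3 then -Real.sqrt d
  else if d % 8 = 0 ∨ d % 8 = 6 then Real.sqrt (2 * d)
  else 0

open Complex Filter Topology

/-! ### Theta asymptotics at rational points -/

/-- Decomposition of `θ (r + σ)` into residue classes modulo a period `N` of
`n ↦ exp (πi n² r)`, each class being transformed by the functional equation. -/
theorem theta_split (N : ℕ) [NeZero N] (r σ : ℂ) (hr : r.im = 0) (hσ : 0 < σ.im)
    (H : ∀ m j : ℤ, cexp (π * I * (m * N + j) ^ 2 * r) = cexp (π * I * j ^ 2 * r)) :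
    (-I * (N ^ 2 * σ)) ^ (1 / 2 : ℂ) * jacobiTheta₂ 0 (r + σ) =
      ∑ j : Fin N, cexp (π * I * (j : ℕ) ^ 2 * r) *
        jacobiTheta₂ ((j : ℕ) / N) (-1 / (N ^ 2 * σ)) := by
  have hN : (N : ℂ) ≠ 0 := NeZero.ne _
  have hσ0 : σ ≠ 0 := by rintro rfl; simp at hσ
  have hc : (-I * (N ^ 2 * σ)) ^ (1 / 2 : ℂ) ≠ 0 := by
    rw [Ne, Complex.cpow_eq_zero_iff]
    simp [hN, hσ0]
  have him : 0 < (r + σ).im := by simpa [hr] using hσ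
  have hsum := (summable_jacobiTheta₂_term_iff 0 (r + σ)).mpr him
  let e : Fin N × ℤ ≃ ℤ := (Equiv.prodComm _ _).trans (Int.divModEquiv N).symm
  have hterm : ∀ j : Fin N, ∀ m : ℤ, jacobiTheta₂_term (e (j, m)) 0 (r + σ) =
      cexp (π * I * (j : ℕ) ^ 2 * r) * cexp (π * I * (j : ℕ) ^ 2 * σ) *
        jacobiTheta₂_term m ((j : ℕ) * N * σ) (N ^ 2 * σ) := by
    intro j m
    have h := H m (j : ℕ)
    have he : ((e (j, m) : ℤ) : ℂ) = m * N + (j : ℕ) := by simp [e]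
    push_cast at h
    rw [jacobiTheta₂_term, jacobiTheta₂_term, he, ← h, ← Complex.exp_add, ← Complex.exp_add]
    congr 1
    ring
  have hsum' : Summable fun p : Fin N × ℤ => jacobiTheta₂_term (e p) 0 (r + σ) :=
    e.summable_iff.mpr hsum
  have key : jacobiTheta₂ 0 (r + σ) = ∑ j : Fin N,
      cexp (π * I * (j : ℕ) ^ 2 * r) * cexp (π * I * (j : ℕ) ^ 2 * σ) *
        jacobiTheta₂ ((j : ℕ) * N * σ) (N ^ 2 * σ) := by
    rw [jacobiTheta₂, ← e.tsum_eq, hsum'.tsum_prod, tsum_fintype]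
    refine Finset.sum_congr rfl fun j _ => ?_
    simp_rw [hterm, tsum_mul_left]
    rfl
  rw [key, Finset.mul_sum]
  refine Finset.sum_congr rfl fun j _ => ?_
  rw [jacobiTheta₂_functional_equation]
  have h1 : ((j : ℕ) * N * σ : ℂ) / (N ^ 2 * σ) = (j : ℕ) / N := by field_simp
  have h2 : -(π : ℂ) * I * ((j : ℕ) * N * σ) ^ 2 / (N ^ 2 * σ) = -(π * I * (j : ℕ) ^ 2 * σ) := by
    field_simp
  rw [h1, h2, Complex.exp_neg]
  generalize (-I * (N ^ 2 * σ) : ℂ) ^ (1 / 2 : ℂ) = c at hc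
  field_simp

/-- For real `x`, only the constant term of `θ (x, τ)` survives as `Im τ → ∞`. -/
theorem tendsto_jacobiTheta₂_one {α : Type*} {l : Filter α} (x : ℂ) (hx : x.im = 0)
    {τ : α → ℂ} (hτ : Tendsto (fun a => (τ a).im) l atTop) :
    Tendsto (fun a => jacobiTheta₂ x (τ a)) l (𝓝 1) := by
  have h1 : (1 : ℂ) = ∑' n : ℤ, if n = 0 then 1 else 0 := by simp
  rw [h1]
  have hb : Summable fun n : ℤ => ‖jacobiTheta₂_term n 0 I‖ :=
    ((summable_jacobiTheta₂_term_iff 0 I).mpr (by simp)).norm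
  refine tendsto_tsum_of_dominated_convergence hb ?_ ?_
  · intro n
    split_ifs with hn
    · simpa [hn, jacobiTheta₂_term] using tendsto_const_nhds
    · rw [tendsto_zero_iff_norm_tendsto_zero]
      simp_rw [norm_jacobiTheta₂_term, hx, mul_zero, sub_zero]
      refine Real.tendsto_exp_atBot.comp (hτ.const_mul_atTop_of_neg ?_)
      have : (0 : ℝ) < (n : ℝ) ^ 2 := by positivity
      nlinarith [Real.pi_pos]
  · filter_upwards [hτ.eventually_ge_atTop 1] with a ha n
    rw [norm_jacobiTheta₂_term, norm_jacobiTheta₂_term, Real.exp_le_exp, hx]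
    have : 0 ≤ π * (n : ℝ) ^ 2 := by positivity
    simp
    nlinarith

/-- The leading asymptotics of `θ` at a rational point `r` is a quadratic Gauss sum. -/
theorem tendsto_theta {α : Type*} {l : Filter α} (N : ℕ) [NeZero N] (r : ℂ) (hr : r.im = 0)
    (H : ∀ m j : ℤ, cexp (π * I * (m * N + j) ^ 2 * r) = cexp (π * I * j ^ 2 * r))
    {σ : α → ℂ} (hσ : ∀ᶠ a in l, 0 < (σ a).im)
    (hσ' : Tendsto (fun a => (-1 / σ a).im) l atTop) :
    Tendsto (fun a => (-I * (N ^ 2 * σ a)) ^ (1 / 2 : ℂ) * jacobiTheta₂ 0 (r + σ a)) l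
      (𝓝 (∑ j : Fin N, cexp (π * I * (j : ℕ) ^ 2 * r))) := by
  have hN : (0 : ℝ) < N := by exact_mod_cast Nat.pos_of_neZero N
  have hlim : Tendsto (fun a => ∑ j : Fin N, cexp (π * I * (j : ℕ) ^ 2 * r) *
        jacobiTheta₂ ((j : ℕ) / N) (-1 / (N ^ 2 * σ a))) l
      (𝓝 (∑ j : Fin N, cexp (π * I * (j : ℕ) ^ 2 * r) * 1)) := by
    refine tendsto_finsetSum _ fun j _ => (tendsto_jacobiTheta₂_one _ ?_ ?_).const_mul _
    · rw [← Complex.ofReal_natCast, ← Complex.ofReal_natCast, ← Complex.ofReal_div,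
        Complex.ofReal_im]
    · have : ∀ a, (-1 / (N ^ 2 * σ a)).im = ((N : ℝ) ^ 2)⁻¹ * (-1 / σ a).im := by
        intro a
        rw [← Complex.im_ofReal_mul]
        congr 1
        push_cast
        ring
      simp_rw [this]
      exact hσ'.const_mul_atTop (by positivity)
  simp only [mul_one] at hlim
  refine hlim.congr' ?_
  filter_upwards [hσ] with a ha
  exact (theta_split N r (σ a) hr ha H).symm

/-! ### Reciprocity and the closed form -/

theorem ofReal_mul_cpow {a : ℝ} (ha : 0 < a) {z : ℂ} (hz : z ≠ 0) (w : ℂ) :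
    ((a : ℂ) * z) ^ w = (a : ℂ) ^ w * z ^ w := by
  have ha' : (a : ℂ) ≠ 0 := by exact_mod_cast ha.ne'
  rw [Complex.cpow_def_of_ne_zero (mul_ne_zero ha' hz), Complex.cpow_def_of_ne_zero ha',
    Complex.cpow_def_of_ne_zero hz, Complex.log_ofReal_mul ha hz, Complex.ofReal_log ha.le,
    add_mul, Complex.exp_add]

/-- Landsberg–Schaar reciprocity between the moduli `d` and `4`. -/
theorem gauss_reciprocity (d : ℕ) (hd : 1 ≤ d) :
    ∑ j : Fin 4, cexp (π * I * (j : ℕ) ^ 2 * (-d / 4)) =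
      (-I * (4 / d)) ^ (1 / 2 : ℂ) * ∑ j : Fin d, cexp (π * I * (j : ℕ) ^ 2 * (4 / d)) := by
  have : NeZero d := ⟨by omega⟩
  have hdC : (d : ℂ) ≠ 0 := NeZero.ne _
  have hdR : (0 : ℝ) < d := by exact_mod_cast hd
  -- `-1 / τ = -d / 4 + s t` for `τ = 4 / d + i / t`
  let s : ℝ → ℂ := fun t => (I / t) / ((4 / d) * (4 / d + I / t))
  have hs : ∀ t : ℝ, 0 < t → -1 / s t = (4 / d : ℝ) ^ 2 * (I * t) - (4 / d : ℝ) := by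
    intro t ht
    have ht' : (t : ℂ) ≠ 0 := by exact_mod_cast ht.ne'
    simp only [s]
    rw [div_div_eq_mul_div]
    push_cast
    field_simp
    linear_combination (-4 * t : ℂ) * I_sq
  have hsim : ∀ t : ℝ, 0 < t → (-1 / s t).im = (4 / d : ℝ) ^ 2 * t := by
    intro t ht
    rw [hs t ht, ← Complex.ofReal_pow, Complex.sub_im, Complex.im_ofReal_mul, Complex.ofReal_im]
    simp
  have hτ0 : ∀ t : ℝ, 0 < t → (4 / d + I / t : ℂ) ≠ 0 := by
    intro t ht h
    have := congrArg Complex.im h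
    rw [← Complex.ofReal_natCast] at this
    simp [Complex.div_im, ht.ne'] at this
  have hspos : ∀ t : ℝ, 0 < t → 0 < (s t).im := by
    intro t ht
    have h := hsim t ht
    have hp : 0 < (4 / d : ℝ) ^ 2 * t := by positivity
    rw [← h, neg_div, one_div, Complex.neg_im, Complex.inv_im, neg_div, neg_neg] at hp
    exact (div_pos_iff_of_pos_right (Complex.normSq_pos.mpr
      (by intro h0; simp [h0] at hp))).mp hp
  have hG := tendsto_theta (l := atTop) d (4 / d)
    (by rw [← Complex.ofReal_natCast]; simp [Complex.div_im])
    (by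
      intro m j
      rw [Complex.exp_eq_exp_iff_exists_int]
      refine ⟨2 * m ^ 2 * d + 4 * m * j, ?_⟩
      push_cast
      field_simp
      ring)
    (σ := fun t : ℝ => I / t)
    (by
      filter_upwards [eventually_gt_atTop 0] with t ht
      simpa using ht)
    (by
      refine tendsto_id.congr fun t => ?_
      rw [div_div_eq_mul_div]
      simp [Complex.div_I])
  have hH := tendsto_theta (l := atTop) 4 (-d / 4)
    (by rw [← Complex.ofReal_natCast]; simp)
    (by
      intro m j
      rw [Complex.exp_eq_exp_iff_exists_int]
      refine ⟨-(2 * m ^ 2 * d + m * j * d), ?_⟩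
      push_cast
      ring)
    (σ := s)
    (by
      filter_upwards [eventually_gt_atTop 0] with t ht
      exact hspos t ht)
    (by
      refine (tendsto_id.const_mul_atTop (show (0 : ℝ) < (4 / d : ℝ) ^ 2 by positivity)).congr' ?_
      filter_upwards [eventually_gt_atTop 0] with t ht
      exact (hsim t ht).symm)
  refine tendsto_nhds_unique hH ?_
  have hinv : Tendsto (fun t : ℝ => I / (t : ℂ)) atTop (𝓝 0) := by
    have h : Tendsto (fun t : ℝ => I * ((t⁻¹ : ℝ) : ℂ)) atTop (𝓝 (I * ((0 : ℝ) : ℂ))) :=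
      ((Complex.continuous_ofReal.tendsto 0).comp tendsto_inv_atTop_zero).const_mul I
    simpa [div_eq_mul_inv] using h
  have hu : Tendsto (fun t : ℝ => (1 / (1 + d / 4 * (I / t)) : ℂ) ^ (1 / 2 : ℂ)) atTop
      (𝓝 1) := by
    have h1 : Tendsto (fun t : ℝ => (1 / (1 + d / 4 * (I / t)) : ℂ)) atTop
        (𝓝 (1 / (1 + d / 4 * 0))) :=
      tendsto_const_nhds.div ((hinv.const_mul _).const_add _) (by simp)
    simp only [mul_zero, add_zero, div_one] at h1
    simpa using h1.cpow (tendsto_const_nhds (x := (1 / 2 : ℂ))) (by simp)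
  have hv : Tendsto (fun t : ℝ => (-I * (4 / d + I / t) : ℂ) ^ (1 / 2 : ℂ)) atTop
      (𝓝 ((-I * (4 / d)) ^ (1 / 2 : ℂ))) := by
    refine Tendsto.cpow ?_ tendsto_const_nhds ?_
    · simpa using ((hinv.const_add (4 / d : ℂ)).const_mul (-I))
    · right
      have : (-I * (4 / d) : ℂ) = ((4 / d : ℝ) : ℂ) * (-I) := by push_cast; ring
      rw [this, Complex.im_ofReal_mul]
      simp [hdR.ne']
  have hprod := (hu.mul hv).mul hG
  rw [one_mul] at hprod
  refine hprod.congr' ?_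
  filter_upwards [eventually_gt_atTop 0] with t ht
  have ht' : (t : ℂ) ≠ 0 := by exact_mod_cast ht.ne'
  have hτt := hτ0 t ht
  have hfe := jacobiTheta₂_functional_equation 0 (4 / d + I / t)
  have hneg : (-1 / (4 / d + I / t) : ℂ) = -d / 4 + s t := by
    have e : s t = ((4 / d + I / t) - 4 / d) / ((4 / d) * (4 / d + I / t)) := by
      rw [add_sub_cancel_left]
    rw [e]
    generalize (4 / d + I / t : ℂ) = w at hτt
    field_simp
    ring
  -- the positive real factor `d² / t` can be split off the complex square root
  have hsq : (-I * ((4 : ℕ) ^ 2 * s t)) ^ (1 / 2 : ℂ) =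
      (-I * (d ^ 2 * (I / t))) ^ (1 / 2 : ℂ) * (1 / (1 + d / 4 * (I / t)) : ℂ) ^ (1 / 2 : ℂ) := by
    have e1 : (-I * (d ^ 2 * (I / t)) : ℂ) = ((d ^ 2 / t : ℝ) : ℂ) := by
      push_cast
      linear_combination (-(d : ℂ) ^ 2 / t) * I_sq
    have e3 : (1 + d / 4 * (I / t) : ℂ) = d / 4 * (4 / d + I / t) := by field_simp
    have e2 : (-I * ((4 : ℕ) ^ 2 * s t)) =
        ((d ^ 2 / t : ℝ) : ℂ) * (1 / (1 + d / 4 * (I / t)) : ℂ) := by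
      rw [← e1, e3]
      simp only [s]
      push_cast
      generalize (4 / d + I / t : ℂ) = w at *
      field_simp
    rw [e1, e2]
    refine ofReal_mul_cpow (by positivity) ?_ _
    rw [e3]
    exact one_div_ne_zero (mul_ne_zero (by simpa using hdC) hτt)
  have hc : (-I * (4 / d + I / t) : ℂ) ^ (1 / 2 : ℂ) ≠ 0 := by
    rw [Ne, Complex.cpow_eq_zero_iff]
    simp [hτt]
  rw [hsq, hfe, hneg]
  generalize (-I * (4 / d + I / t) : ℂ) ^ (1 / 2 : ℂ) = c at hc
  simp only [ne_eq, OfNat.ofNat_ne_zero, not_false_eq_true, zero_pow, mul_zero, zero_div,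
    Complex.exp_zero, mul_one]
  rw [mul_assoc _ c, ← mul_assoc c, mul_comm c, mul_assoc _ c, ← mul_assoc c, mul_one_div_cancel hc]
  ring

/-- Closed form of the quadratic Gauss sum, with `H = 1 + 2 exp (-πi d / 4) + exp (-πi d)`
multiplied out. -/
theorem gauss_sum_eq (d : ℕ) (hd : 1 ≤ d) :
    ∑ j : Fin d, cexp (π * I * (j : ℕ) ^ 2 * (4 / d)) =
      (√d / 2 : ℝ) * (cexp ((π / 4 : ℝ) * I) + (2 : ℝ) * cexp ((π / 4 - π * d / 4 : ℝ) * I) +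
        cexp ((π / 4 - π * d : ℝ) * I)) := by
  have hdR : (0 : ℝ) < d := by exact_mod_cast hd
  have hH : ∑ j : Fin 4, cexp (π * I * (j : ℕ) ^ 2 * (-d / 4)) =
      1 + 2 * cexp (-(π * d / 4) * I) + cexp (-(π * d) * I) := by
    -- the terms `j = 1` and `j = 3` agree, as `9 ≡ 1` modulo `8`
    have h3 : cexp (π * I * 3 ^ 2 * (-d / 4)) = cexp (-(π * d / 4) * I) := by
      rw [Complex.exp_eq_exp_iff_exists_int]
      refine ⟨-d, ?_⟩
      push_cast
      ring
    have h1 : cexp (π * I * 1 ^ 2 * (-d / 4)) = cexp (-(π * d / 4) * I) := by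
      congr 1; ring
    have h2 : cexp (π * I * 2 ^ 2 * (-d / 4)) = cexp (-(π * d) * I) := by
      congr 1; ring
    have h0 : cexp (π * I * 0 ^ 2 * (-d / 4)) = 1 := by simp
    rw [Fin.sum_univ_four]
    have v2 : ((2 : Fin 4) : ℕ) = 2 := rfl
    have v3 : ((3 : Fin 4) : ℕ) = 3 := rfl
    rw [Fin.val_zero, Fin.val_one, v2, v3, Nat.cast_zero, Nat.cast_one, Nat.cast_ofNat,
      Nat.cast_ofNat, h0, h1, h2, h3]
    ring
  have hc : (-I * (4 / d)) ^ (1 / 2 : ℂ) = (2 / √d : ℝ) * cexp (-((π / 4 : ℝ) * I)) := by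
    have e : (-I * (4 / d) : ℂ) = ((4 / d : ℝ) : ℂ) * -I := by push_cast; ring
    have hr : ((4 / d : ℝ) : ℂ) ^ (1 / 2 : ℂ) = (2 / √d : ℝ) := by
      have h4 : √(4 : ℝ) = 2 := by
        rw [show (4 : ℝ) = 2 ^ 2 by norm_num, Real.sqrt_sq (by norm_num)]
      rw [← h4, ← Real.sqrt_div (by norm_num), Real.sqrt_eq_rpow,
        Complex.ofReal_cpow (by positivity)]
      push_cast
      rfl
    rw [e, ofReal_mul_cpow (by positivity) (neg_ne_zero.mpr I_ne_zero), hr,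
      Complex.cpow_def_of_ne_zero (neg_ne_zero.mpr I_ne_zero), Complex.log_neg_I]
    congr 2
    push_cast
    ring
  have h := gauss_reciprocity d hd
  rw [hH, hc] at h
  generalize (∑ j : Fin d, cexp (π * I * (j : ℕ) ^ 2 * (4 / d))) = G at h ⊢
  have hd0 : ((√d : ℝ) : ℂ) ≠ 0 := by exact_mod_cast (Real.sqrt_pos.mpr hdR).ne'
  have hG : G = (√d / 2 : ℝ) * (cexp ((π / 4 : ℝ) * I) *
      (1 + 2 * cexp (-(π * d / 4) * I) + cexp (-(π * d) * I))) := by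
    rw [h, Complex.exp_neg]
    push_cast
    field_simp
  have a1 : cexp ((π / 4 - π * d / 4 : ℝ) * I) =
      cexp ((π / 4 : ℝ) * I) * cexp (-(π * d / 4) * I) := by
    rw [← Complex.exp_add]
    congr 1
    push_cast
    ring
  have a2 : cexp ((π / 4 - π * d : ℝ) * I) = cexp ((π / 4 : ℝ) * I) * cexp (-(π * d) * I) := by
    rw [← Complex.exp_add]
    congr 1
    push_cast
    ring
  rw [hG, a1, a2]
  push_cast
  ring

/-! ### Imaginary part, by residue modulo 8 -/

/-- `Σ_{j=0}^{d-1} sin(4π j²/d) = q(d)`. -/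
theorem sin_gauss_sum (d : ℕ) (hd : 1 ≤ d) :
    ∑ j : Fin d, Real.sin (4 * π * (j : ℝ) ^ 2 / d) = q d := by
  have him : ∑ j : Fin d, Real.sin (4 * π * (j : ℝ) ^ 2 / d) =
      (∑ j : Fin d, cexp (π * I * (j : ℕ) ^ 2 * (4 / d))).im := by
    rw [Complex.im_sum]
    refine Finset.sum_congr rfl fun j _ => ?_
    rw [← Complex.exp_ofReal_mul_I_im]
    congr 2
    push_cast
    ring
  rw [him, gauss_sum_eq d hd, Complex.im_ofReal_mul, Complex.add_im, Complex.add_im,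
    Complex.im_ofReal_mul 2, Complex.exp_ofReal_mul_I_im, Complex.exp_ofReal_mul_I_im,
    Complex.exp_ofReal_mul_I_im]
  have hs : √(2 * d : ℝ) = √2 * √d := Real.sqrt_mul (by norm_num) _
  obtain ⟨k, r, hr, rfl⟩ : ∃ k r : ℕ, r < 8 ∧ d = 8 * k + r :=
    ⟨d / 8, d % 8, Nat.mod_lt _ (by norm_num), (Nat.div_add_mod d 8).symm⟩
  have e1 : Real.sin (π / 4 - π * (8 * k + r : ℕ) / 4) = Real.sin (π / 4 - π * r / 4) := by
    rw [← Real.sin_sub_nat_mul_two_pi (π / 4 - π * r / 4) k]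
    congr 1
    push_cast
    ring
  have e2 : Real.sin (π / 4 - π * (8 * k + r : ℕ)) = Real.sin (π / 4 - π * r) := by
    rw [← Real.sin_sub_nat_mul_two_pi (π / 4 - π * r) (4 * k)]
    congr 1
    push_cast
    ring
  have hmod : (8 * k + r) % 8 = r := by omega
  -- apart from the factor `√d`, both sides depend on the residue `r` only
  rw [e1, e2, q, hmod, hs]
  generalize √((8 * k + r : ℕ) : ℝ) = x
  have s4 := Real.sin_pi_div_four
  have c4 := Real.cos_pi_div_four
  have sh (y : ℝ) (n : ℕ) : Real.sin (y - π * n) = (-1) ^ n * Real.sin y := by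
    rw [mul_comm π, Real.sin_sub_nat_mul_pi]
  rw [sh]
  interval_cases r
  · norm_num [s4]
    ring
  · norm_num [s4]
  · have : π / 4 - π * (2 : ℕ) / 4 = -(π / 4) := by push_cast; ring
    rw [this, Real.sin_neg]
    norm_num [s4]
    right; ring
  · have : π / 4 - π * (3 : ℕ) / 4 = -(π / 2) := by push_cast; ring
    rw [this, Real.sin_neg]
    norm_num [s4]
  · have : π / 4 - π * (4 : ℕ) / 4 = π / 4 - π := by push_cast; ring
    rw [this, Real.sin_sub_pi]
    norm_num [s4]
    right; ring
  · have : π / 4 - π * (5 : ℕ) / 4 = -π := by push_cast; ring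
    rw [this, Real.sin_neg]
    norm_num [s4]
  · have : π / 4 - π * (6 : ℕ) / 4 = π / 4 + π / 2 - 2 * π := by push_cast; ring
    rw [this, Real.sin_sub_two_pi, Real.sin_add_pi_div_two]
    norm_num [s4, c4]
    ring
  · have : π / 4 - π * (7 : ℕ) / 4 = π / 2 - 2 * π := by push_cast; ring
    rw [this, Real.sin_sub_two_pi]
    norm_num [s4]
end

section
/- For every integer d ≥ 1, the d×d matrix B = ((1+i)/2)·F + ((1−i)/2)·F† has all entries real, and B² is the identity matrix. -/
/-! With `a = (1+i)/2` and `b = (1-i)/2 = conj a`, the entries of `B` are `a z + conj (a z)` because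
`F` is symmetric, hence real. For the square, `a² + b² = 0` and `a b = 1/2`, so
`B² = a² (F² - (F†)²) + (F F† + F† F) / 2`. Orthogonality of the additive characters of `ℤ/d`
(`sum_exp_eq_ite`) gives `F F† = 1`, and shows that `F²` is the real symmetric permutation matrix
of `j ↦ -j`, so `F² = (F†)²`; only the identity remains. -/

open Matrix
open scoped Real

/-- The normalized discrete Fourier transform matrix,
`F j k = exp(-2πi jk/d)/√d`. -/
noncomputable def dft (d : ℕ) : Matrix (Fin d) (Fin d) ℂ :=
  fun j k => Complex.exp (-2 * π * Complex.I * (j : ℂ) * (k : ℂ) / d) / Real.sqrt d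

/-- `B = ((1+i)/2) F + ((1-i)/2) F†`. -/
noncomputable def Bmat (d : ℕ) : Matrix (Fin d) (Fin d) ℂ :=
  ((1 + Complex.I) / 2) • dft d + ((1 - Complex.I) / 2) • (dft d)ᴴ

/-- Orthogonality of the additive characters of `ℤ/d`. -/
lemma sum_exp_eq_ite (d : ℕ) (hd : 1 ≤ d) (n : ℤ) :
    ∑ l : Fin d, Complex.exp (2 * π * Complex.I * n * (l : ℂ) / d) =
      if (d : ℤ) ∣ n then (d : ℂ) else 0 := by
  have hd0 : (d : ℂ) ≠ 0 := by exact_mod_cast (by omega : d ≠ 0)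
  have hpow (l : ℕ) : Complex.exp (2 * π * Complex.I * n * (l : ℂ) / d) =
      Complex.exp (2 * π * Complex.I * n / d) ^ l := by
    rw [← Complex.exp_nat_mul]
    congr 1
    ring
  have hroot : Complex.exp (2 * π * Complex.I * n / d) = 1 ↔ (d : ℤ) ∣ n := by
    rw [Complex.exp_eq_one_iff]
    refine exists_congr fun m => ?_
    have hpi : 2 * (π : ℂ) * Complex.I ≠ 0 := Complex.two_pi_I_ne_zero
    have hm : 2 * π * Complex.I * n / d = m * (2 * π * Complex.I) ↔ (n : ℂ) = d * m := by
      rw [div_eq_iff hd0, ← mul_right_inj' hpi (b := (n : ℂ))]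
      ring_nf
    rw [hm]
    exact_mod_cast Iff.rfl
  simp_rw [hpow]
  rw [Fin.sum_univ_eq_sum_range (fun l => Complex.exp (2 * π * Complex.I * n / d) ^ l)]
  split_ifs with h
  · simp [hroot.2 h]
  · rw [geom_sum_eq (fun h1 => h (hroot.1 h1)), ← hpow, mul_div_assoc, div_self hd0, mul_one,
      mul_comm, Complex.exp_int_mul_two_pi_mul_I, sub_self, zero_div]

lemma dft_conjTranspose_apply (d : ℕ) (j k : Fin d) :
    (dft d)ᴴ j k = Complex.exp (2 * π * Complex.I * (j : ℂ) * (k : ℂ) / d) / Real.sqrt d := by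
  simp only [conjTranspose_apply, dft, star_div₀, Complex.star_def, Complex.conj_ofReal,
    ← Complex.exp_conj, map_div₀, map_mul, map_neg, Complex.conj_I, map_natCast, map_ofNat]
  congr 2
  ring

lemma dft_transpose (d : ℕ) : (dft d)ᵀ = dft d := by
  ext j k
  simp only [transpose_apply, dft]
  congr 2
  ring

/-- Normalized form of `sum_exp_eq_ite`, in the shape of an entry of a product of two matrices
among `F` and `F†`. -/
lemma sum_eq_ite_of_eq (d : ℕ) (hd : 1 ≤ d) (n : ℤ) (f g : Fin d → ℂ)
    (h : ∀ l, f l + g l = 2 * π * Complex.I * n * (l : ℂ) / d) :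
    ∑ l : Fin d, Complex.exp (f l) / Real.sqrt d * (Complex.exp (g l) / Real.sqrt d) =
      if (d : ℤ) ∣ n then 1 else 0 := by
  have hd0 : (d : ℂ) ≠ 0 := by exact_mod_cast (by omega : d ≠ 0)
  have hs : (Real.sqrt d : ℂ) * Real.sqrt d = d := by
    rw [← Complex.ofReal_mul, Real.mul_self_sqrt (Nat.cast_nonneg d), Complex.ofReal_natCast]
  simp_rw [div_mul_div_comm, ← Complex.exp_add, h, hs]
  rw [← Finset.sum_div, sum_exp_eq_ite d hd n]
  split_ifs <;> simp [hd0]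

lemma dft_mul_conjTranspose (d : ℕ) (hd : 1 ≤ d) : dft d * (dft d)ᴴ = 1 := by
  ext j k
  simp only [mul_apply, dft_conjTranspose_apply]
  simp only [dft]
  rw [sum_eq_ite_of_eq d hd ((k : ℤ) - (j : ℤ)) _ _ (fun l => by push_cast; ring), one_apply]
  -- Residues in `[0, d)` are congruent modulo `d` only if they are equal.
  have hjk : (d : ℤ) ∣ (k : ℤ) - (j : ℤ) ↔ j = k := by
    rw [← Int.modEq_iff_dvd, Int.natCast_modEq_iff, Fin.ext_iff]
    exact ⟨fun h => h.eq_of_lt_of_lt j.2 k.2, fun h => h ▸ rfl⟩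
  simp only [hjk]

/-- Both squares are the permutation matrix of `j ↦ -j` on `ℤ/d`. -/
lemma dft_mul_self (d : ℕ) (hd : 1 ≤ d) : dft d * dft d = (dft d)ᴴ * (dft d)ᴴ := by
  ext j k
  simp only [mul_apply, dft_conjTranspose_apply]
  simp only [dft]
  rw [sum_eq_ite_of_eq d hd (-((j : ℤ) + (k : ℤ))) _ _ (fun l => by push_cast; ring),
    sum_eq_ite_of_eq d hd ((j : ℤ) + (k : ℤ)) _ _ (fun l => by push_cast; ring)]
  simp only [dvd_neg]

/-- `B` is real-valued and squares to the identity. -/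
theorem Bmat_real_and_sq_eq_one (d : ℕ) (hd : 1 ≤ d) :
    (∀ j k, (Bmat d j k).im = 0) ∧ Bmat d * Bmat d = 1 := by
  constructor
  · intro j k
    have hT : dft d k j = dft d j k := congrFun (congrFun (dft_transpose d) j) k
    simp only [Bmat, Matrix.add_apply, Matrix.smul_apply, conjTranspose_apply, hT, smul_eq_mul]
    rw [← Complex.conj_eq_iff_im]
    simp only [map_add, map_mul, map_div₀, map_sub, map_one, map_ofNat, Complex.conj_I,
      Complex.star_def, Complex.conj_conj]
    ring
  · have h1 := dft_mul_conjTranspose d hd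
    have h2 : (dft d)ᴴ * dft d = 1 := mul_eq_one_comm.1 h1
    have h3 := dft_mul_self d hd
    simp only [Bmat, Matrix.add_mul, Matrix.mul_add, smul_mul_smul_comm, h1, h2, h3]
    match_scalars
    · linear_combination (1 / 2) * Complex.I_sq
    · linear_combination (-1 / 2) * Complex.I_sq
end

section
/- For every integer d ≥ 2, the real quadratic polynomial f(x) = a(d)·x² + b(d)·x + c(d) with c(d) = d − 2d/(d+1) = d(d−1)/(d+1) satisfies f(0) > 0 and f(1) < 0, and there exists exactly one x in the open interval (0,1) with f(x) = 0. -/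
/-- `a(d) = (2d-1)/2 - 2q(d)/d - gcd(4,d)/(2d)`. -/
noncomputable def acoef (d : ℕ) : ℝ :=
  (2 * d - 1) / 2 - 2 * q d / d - (Nat.gcd 4 d : ℝ) / (2 * d)

/-- `b(d) = -2(d-1) + 2q(d)/d`. -/
noncomputable def bcoef (d : ℕ) : ℝ :=
  -2 * ((d : ℝ) - 1) + 2 * q d / d

/-- `c(d) = d - 2d/(d+1) = d(d-1)/(d+1)`. -/
noncomputable def ccoef (d : ℕ) : ℝ :=
  (d : ℝ) - 2 * d / (d + 1)

/-- The leading coefficient may have any sign, or vanish. -/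
lemma existsUnique_root_of_sign_change (a b c : ℝ) (h0 : 0 < c) (h1 : a + b + c < 0) :
    ∃! x : ℝ, x ∈ Set.Ioo (0:ℝ) 1 ∧ a * x ^ 2 + b * x + c = 0 := by
  have hcont : ContinuousOn (fun x : ℝ => a * x ^ 2 + b * x + c) (Set.Icc 0 1) := by fun_prop
  obtain ⟨x, hx, hfx⟩ := intermediate_value_Ioo' zero_le_one hcont
    (show (0:ℝ) ∈ Set.Ioo _ _ from ⟨by simpa using h1, by simpa using h0⟩)
  refine ⟨x, ⟨hx, hfx⟩, ?_⟩
  rintro y ⟨hy, hfy⟩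
  simp only at hfx
  by_contra hne
  -- Vieta's formulas for the two distinct roots.
  have hsum : a * (x + y) + b = 0 := by
    apply mul_left_cancel₀ (sub_ne_zero.mpr hne)
    linear_combination hfy - hfx
  have hprod : c = a * (x * y) := by linear_combination hfx - x * hsum
  have hxy : 0 < x * y := mul_pos hx.1 hy.1
  have ha : 0 < a := pos_of_mul_pos_left (hprod ▸ h0) hxy.le
  have hone : a + b + c = a * ((1 - x) * (1 - y)) := by linear_combination hsum + hprod
  have : 0 < a * ((1 - x) * (1 - y)) :=
    mul_pos ha (mul_pos (sub_pos.mpr hx.2) (sub_pos.mpr hy.2))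
  linarith

lemma ccoef_pos (d : ℕ) (hd : 2 ≤ d) : 0 < ccoef d := by
  have hd' : (2:ℝ) ≤ d := by exact_mod_cast hd
  have h : ccoef d = d * (d - 1) / (d + 1) := by
    unfold ccoef
    field_simp
    ring
  rw [h]
  exact div_pos (mul_pos (by linarith) (by linarith)) (by linarith)

lemma coef_sum_neg (d : ℕ) (hd : 2 ≤ d) : acoef d + bcoef d + ccoef d < 0 := by
  have hd' : (2:ℝ) ≤ d := by exact_mod_cast hd
  have h : acoef d + bcoef d + ccoef d
      = -1 / 2 + 2 / ((d:ℝ) + 1) - (Nat.gcd 4 d : ℝ) / (2 * d) := by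
    unfold acoef bcoef ccoef
    field_simp
    ring
  rw [h]
  -- For `d = 2` the value `gcd(4,2) = 2` is needed; for `d ≥ 3` positivity of the gcd suffices.
  rcases hd.eq_or_lt with rfl | h3
  · norm_num
  · have h3' : (3:ℝ) ≤ d := by exact_mod_cast h3
    have hg : (0:ℝ) < (Nat.gcd 4 d : ℝ) / (2 * d) := by
      have : 0 < Nat.gcd 4 d := Nat.gcd_pos_of_pos_left _ (by norm_num)
      positivity
    have : 2 / ((d:ℝ) + 1) ≤ 1 / 2 := by
      rw [div_le_div_iff₀ (by linarith) (by norm_num)]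
      linarith
    linarith

/-- The quadratic `f(x) = a(d)x² + b(d)x + c(d)` satisfies `f(0) > 0`, `f(1) < 0`,
and has exactly one root in `(0,1)`. -/
theorem quadratic_unique_root_in_Ioo (d : ℕ) (hd : 2 ≤ d) :
    (0 < acoef d * (0:ℝ) ^ 2 + bcoef d * 0 + ccoef d) ∧
    (acoef d * (1:ℝ) ^ 2 + bcoef d * 1 + ccoef d < 0) ∧
    (∃! x : ℝ, x ∈ Set.Ioo (0:ℝ) 1 ∧ acoef d * x ^ 2 + bcoef d * x + ccoef d = 0) := by
  have h0 := ccoef_pos d hd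
  have h1 := coef_sum_neg d hd
  exact ⟨by simpa using h0, by simpa using h1, existsUnique_root_of_sign_change _ _ _ h0 h1⟩
end

section
/- For every integer d ≥ 2 there exists a real number t such that, with Q(t) = cos(t)·I + i·sin(t)·B, one has Tr((Q(t)^{⊗2}) P1 (Q(t)^{⊗2})† · P1) = 2d/(d+1). -/
/-!
The trace equals `f t = ∑ j k, |Q(t) j k| ^ 4`, a continuous real function of `t`. At `t = 0` the
matrix `Q` is the identity, so `f 0 = d ≥ 2d/(d+1)`. At `t = π/2` the matrix `Q` is `i B`, and
`B j k = (cos θ + sin θ)/√d` with `θ = 2π jk/d`, so `|B j k| ^ 4 = (1 + sin 2θ)² / d²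
= (3/2 + 2 sin 2θ - (cos 4θ)/2) / d²`. Sums of `d`-th roots of unity along a row are `0` or `d`
(`sum_exp_eq`); hence the sines sum to zero, while the cosines contribute a nonnegative amount in
each row and `d` in row `0`. This gives `f (π/2) ≤ 3/2 - 1/(2d)`, which is at most `2d/(d+1)`
because `(d+1)² ≥ 4d`. The intermediate value theorem yields the desired `t`.
-/

open Matrix
open scoped Kronecker Real

/-- The orthogonal projection onto the span of `{e_j ⊗ e_j}` in `ℂ^d ⊗ ℂ^d`,
as a `d² × d²` matrix indexed by `Fin d × Fin d`. -/
def P1 (d : ℕ) : Matrix (Fin d × Fin d) (Fin d × Fin d) ℂ :=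
  fun p q => if p.1 = p.2 ∧ q.1 = q.2 ∧ p.1 = q.1 then 1 else 0

/-- `Q(t) = cos(t)·1 + i sin(t)·B`. -/
noncomputable def Qmat (d : ℕ) (t : ℝ) : Matrix (Fin d) (Fin d) ℂ :=
  (Real.cos t : ℂ) • (1 : Matrix (Fin d) (Fin d) ℂ)
    + (Complex.I * Real.sin t) • Bmat d

/-- Trace of the twirled projection as a fourth-moment sum of the entries: only the diagonal
vectors `e_j ⊗ e_j` contribute, and `⟨jj|A ⊗ A|kk⟩ = (A j k)²`. -/
lemma trace_eq_sum (d : ℕ) (A : Matrix (Fin d) (Fin d) ℂ) :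
    ((A ⊗ₖ A) * P1 d * (A ⊗ₖ A)ᴴ * P1 d).trace =
      ((∑ j, ∑ k, Complex.normSq (A j k) ^ 2 : ℝ) : ℂ) := by
  have h1 : ∀ (M : Matrix (Fin d × Fin d) (Fin d × Fin d) ℂ) p q,
      (M * P1 d) p q = if q.1 = q.2 then M p (q.1, q.1) else 0 := by
    rintro M p ⟨a, b⟩
    simp only [Matrix.mul_apply, P1, Fintype.sum_prod_type]
    by_cases h : a = b
    · subst h
      rw [Finset.sum_eq_single a, Finset.sum_eq_single a]
      · simp
      · intro c _ hc
        simp [Ne.symm hc]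
      · simp
      · intro c _ hc
        simp [hc]
      · simp
    · simp [h]
  simp only [Matrix.trace, Matrix.diag_apply, h1, Fintype.sum_prod_type]
  simp only [Finset.sum_ite_eq, Finset.mem_univ, if_true]
  push_cast
  refine Finset.sum_congr rfl fun j _ => ?_
  simp only [Matrix.mul_apply, h1, Fintype.sum_prod_type, ite_mul, zero_mul,
    Finset.sum_ite_eq, Finset.mem_univ, if_true]
  refine Finset.sum_congr rfl fun k _ => ?_
  simp only [Matrix.conjTranspose_apply, Matrix.kroneckerMap_apply, star_mul',
    ← Complex.mul_conj, starRingEnd_apply]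
  ring

/-- A character sum over `ℤ/d` is either `0` or `d`. -/
lemma sum_exp_eq (d : ℕ) (hd : 0 < d) (m : ℕ) :
    ∑ k : Fin d, Complex.exp ((2 * π * m * (k : ℕ) / d : ℝ) * Complex.I) = 0 ∨
    ∑ k : Fin d, Complex.exp ((2 * π * m * (k : ℕ) / d : ℝ) * Complex.I) = d := by
  have hd' : (d : ℂ) ≠ 0 := by exact_mod_cast hd.ne'
  set z := Complex.exp (2 * π * m / d * Complex.I) with hz
  have hk : ∀ k : Fin d,
      Complex.exp ((2 * π * m * (k : ℕ) / d : ℝ) * Complex.I) = z ^ (k : ℕ) := by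
    intro k
    rw [hz, ← Complex.exp_nat_mul]
    congr 1
    push_cast
    ring
  have hzd : z ^ d = 1 := by
    rw [hz, ← Complex.exp_nat_mul, Complex.exp_eq_one_iff]
    refine ⟨m, ?_⟩
    field_simp
    push_cast
    ring
  simp only [hk]
  rw [Fin.sum_univ_eq_sum_range (fun k => z ^ k)]
  by_cases h : z = 1
  · right
    simp [h]
  · left
    rw [geom_sum_eq h, hzd]
    simp

lemma sum_sin_eq_zero (d : ℕ) (hd : 0 < d) (m : ℕ) :
    ∑ k : Fin d, Real.sin (2 * π * m * (k : ℕ) / d) = 0 := by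
  have h : (∑ k : Fin d, Complex.exp ((2 * π * m * (k : ℕ) / d : ℝ) * Complex.I)).im = 0 := by
    rcases sum_exp_eq d hd m with h | h <;> rw [h] <;> simp
  rw [Complex.im_sum] at h
  simpa only [Complex.exp_ofReal_mul_I_im] using h

lemma sum_cos_nonneg (d : ℕ) (hd : 0 < d) (m : ℕ) :
    0 ≤ ∑ k : Fin d, Real.cos (2 * π * m * (k : ℕ) / d) := by
  have h : 0 ≤ (∑ k : Fin d,
      Complex.exp ((2 * π * m * (k : ℕ) / d : ℝ) * Complex.I)).re := by
    rcases sum_exp_eq d hd m with h | h <;> rw [h] <;> simp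
  rw [Complex.re_sum] at h
  simpa only [Complex.exp_ofReal_mul_I_re] using h

lemma Bmat_apply (d : ℕ) (j k : Fin d) :
    Bmat d j k = ((Real.cos (2 * π * (j : ℕ) * (k : ℕ) / d)
      + Real.sin (2 * π * (j : ℕ) * (k : ℕ) / d)) / Real.sqrt d : ℝ) := by
  have e : ∀ a b : Fin d, dft d a b =
      (Real.cos (2 * π * (a : ℕ) * (b : ℕ) / d)
        - Real.sin (2 * π * (a : ℕ) * (b : ℕ) / d) * Complex.I) / Real.sqrt d := by
    intro a b
    have : (-2 * π * Complex.I * (a : ℂ) * (b : ℂ) / d : ℂ)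
        = ((-(2 * π * (a : ℕ) * (b : ℕ) / d) : ℝ) : ℂ) * Complex.I := by
      push_cast
      ring
    rw [dft, this, Complex.exp_mul_I, ← Complex.ofReal_cos, ← Complex.ofReal_sin,
      Real.cos_neg, Real.sin_neg]
    push_cast
    ring
  have hs : 2 * π * ((k : ℕ) : ℝ) * ((j : ℕ) : ℝ) / d = 2 * π * (j : ℕ) * (k : ℕ) / d := by ring
  simp only [Bmat, Matrix.add_apply, Matrix.smul_apply, Matrix.conjTranspose_apply, e, hs,
    smul_eq_mul]
  generalize 2 * π * ((j : ℕ) : ℝ) * ((k : ℕ) : ℝ) / d = x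
  simp only [← starRingEnd_apply, map_div₀, map_sub, map_mul, Complex.conj_ofReal, Complex.conj_I]
  push_cast
  linear_combination (-(Complex.sin x) / (Real.sqrt d : ℂ)) * Complex.I_sq

lemma normSq_Qmat_pi_div_two (d : ℕ) (j k : Fin d) :
    Complex.normSq (Qmat d (π / 2) j k) ^ 2 =
      (3 / 2 + 2 * Real.sin (2 * π * (2 * j : ℕ) * (k : ℕ) / d)
        - Real.cos (2 * π * (4 * j : ℕ) * (k : ℕ) / d) / 2) / d ^ 2 := by
  have hQ : Qmat d (π / 2) j k = Complex.I * Bmat d j k := by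
    simp [Qmat]
  have h2 : 2 * π * ((2 * j : ℕ) : ℝ) * (k : ℕ) / d = 2 * (2 * π * (j : ℕ) * (k : ℕ) / d) := by
    push_cast
    ring
  have h4 : 2 * π * ((4 * j : ℕ) : ℝ) * (k : ℕ) / d
      = 2 * (2 * (2 * π * (j : ℕ) * (k : ℕ) / d)) := by
    push_cast
    ring
  rw [hQ, Complex.normSq_mul, Complex.normSq_I, one_mul, Bmat_apply, Complex.normSq_ofReal, h2, h4]
  generalize 2 * π * ((j : ℕ) : ℝ) * ((k : ℕ) : ℝ) / d = x
  rw [div_mul_div_comm, Real.mul_self_sqrt (Nat.cast_nonneg d), div_pow]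
  congr 1
  have e1 : (Real.cos x + Real.sin x) * (Real.cos x + Real.sin x) = 1 + Real.sin (2 * x) := by
    rw [Real.sin_two_mul]
    linear_combination Real.sin_sq_add_cos_sq x
  rw [e1, Real.cos_two_mul (2 * x)]
  linear_combination Real.sin_sq_add_cos_sq (2 * x)

lemma sum_pi_div_two_le (d : ℕ) (hd : 0 < d) :
    ∑ j, ∑ k, Complex.normSq (Qmat d (π / 2) j k) ^ 2 ≤ 3 / 2 - 1 / (2 * d : ℝ) := by
  have hd' : (0 : ℝ) < d := by exact_mod_cast hd
  simp only [normSq_Qmat_pi_div_two, ← Finset.sum_div, Finset.sum_sub_distrib,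
    Finset.sum_add_distrib, ← Finset.mul_sum, sum_sin_eq_zero d hd]
  -- Row `0` alone contributes `d` to the sum of cosines; the other rows are nonnegative.
  have hc : (d : ℝ) ≤ ∑ j : Fin d, ∑ k : Fin d,
      Real.cos (2 * π * (4 * j : ℕ) * (k : ℕ) / d) := by
    refine le_trans ?_ (Finset.single_le_sum
      (f := fun j : Fin d => ∑ k : Fin d, Real.cos (2 * π * (4 * j : ℕ) * (k : ℕ) / d))
      (fun j _ => sum_cos_nonneg d hd _) (Finset.mem_univ (⟨0, hd⟩ : Fin d)))
    simp
  rw [div_le_iff₀ (by positivity)]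
  have e : (3 / 2 - 1 / (2 * d : ℝ)) * d ^ 2 = 3 / 2 * d ^ 2 - d / 2 := by
    field_simp
  rw [e]
  simp only [Finset.sum_const, Finset.card_univ, Fintype.card_fin, nsmul_eq_mul, mul_zero]
  nlinarith

/-- There is a `t` with `Tr((Q(t)⊗Q(t)) P1 (Q(t)⊗Q(t))† P1) = 2d/(d+1)`. -/
theorem exists_t_trace_eq (d : ℕ) (hd : 2 ≤ d) :
    ∃ t : ℝ,
      ((Qmat d t ⊗ₖ Qmat d t) * P1 d * (Qmat d t ⊗ₖ Qmat d t)ᴴ * P1 d).trace =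
        (2 * d / (d + 1) : ℂ) := by
  have hd' : (2 : ℝ) ≤ d := by exact_mod_cast hd
  set f : ℝ → ℝ := fun t => ∑ j, ∑ k, Complex.normSq (Qmat d t j k) ^ 2 with hf
  have hcont : Continuous f := by
    refine continuous_finsetSum _ fun j _ => continuous_finsetSum _ fun k _ => ?_
    refine (Complex.continuous_normSq.comp ?_).pow 2
    simp only [Qmat, Matrix.add_apply, Matrix.smul_apply, smul_eq_mul]
    fun_prop
  have h0 : f 0 = d := by
    simp [hf, Qmat, Matrix.one_apply, apply_ite Complex.normSq, ite_pow]
  have h1 : f (π / 2) ≤ 2 * d / (d + 1) := by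
    refine (sum_pi_div_two_le d (by omega)).trans ?_
    rw [← sub_nonneg]
    have : (2 * d / (d + 1) - (3 / 2 - 1 / (2 * d)) : ℝ) = (d - 1) ^ 2 / (2 * d * (d + 1)) := by
      field_simp
      ring
    rw [this]
    positivity
  have h2 : (2 * d / (d + 1) : ℝ) ≤ f 0 := by
    rw [h0, div_le_iff₀ (by positivity)]
    nlinarith
  obtain ⟨t, -, ht⟩ := intermediate_value_Icc' (by positivity : (0 : ℝ) ≤ π / 2)
    hcont.continuousOn ⟨h1, h2⟩
  refine ⟨t, ?_⟩
  rw [trace_eq_sum]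
  change ((f t : ℝ) : ℂ) = _
  rw [ht]
  push_cast
  ring
end

section
/- For every integer d ≥ 2, the complex vector space of d²×d² matrices X (indexed by Fin d × Fin d) satisfying (g ⊗ g)·X = X·(g ⊗ g) for every g ∈ G has dimension exactly 3. -/
/-!
Write `ζ = exp(2πi/3)`. Commuting with `g ⊗ g` for the monomial matrix `g` attached to `(σ, α)` is
the entrywise condition
`ζ^(α p + α q) X (p,q) (r,s) = X (σ p, σ q) (σ r, σ s) ζ^(α r + α s)` (`mem_commutant2_iff`).
Diagonal `g` force `X (p,q) (r,s) = 0` unless `{p,q} = {r,s}` as multisets: otherwise `p` or `q`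
has different multiplicities, both in `{0,1,2}`, in the two multisets, and `1, ζ, ζ²` are distinct
(`entry_eq_zero`). On the remaining entries the permutation matrices have, for `d ≥ 2`, exactly
three orbits, represented by `(0,0),(0,0)`, by `(0,1),(0,1)` and by `(0,1),(1,0)`
(`exists_perm_pair`). Hence evaluation at these three entries identifies the commutant with `ℂ³`.
-/

open Matrix
open scoped Kronecker Real

/-- `ζ = exp(2πi/3)`, the principal cube root of unity. -/
noncomputable def zeta : ℂ := Complex.exp (2 * π * Complex.I / 3)

/-- The image of the natural (monomial) representation of `G(3,1,d)`:
matrices with exactly one nonzero entry, a cube root of unity, in each row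
and column. -/
noncomputable def monomialGroup (d : ℕ) : Set (Matrix (Fin d) (Fin d) ℂ) :=
  { g | ∃ (σ : Equiv.Perm (Fin d)) (α : Fin d → ZMod 3),
      ∀ i k, g i k = if i = σ k then zeta ^ (α k).val else 0 }

/-- The commutant of the 2-fold tensor power of the monomial representation:
the space of `d²×d²` matrices commuting with `g ⊗ g` for all `g` in the
monomial group. -/
noncomputable def commutant2 (d : ℕ) :
    Submodule ℂ (Matrix (Fin d × Fin d) (Fin d × Fin d) ℂ) where
  carrier := { X | ∀ g ∈ monomialGroup d, (g ⊗ₖ g) * X = X * (g ⊗ₖ g) }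
  add_mem' := by
    intro X Y hX hY g hg
    rw [Matrix.mul_add, Matrix.add_mul, hX g hg, hY g hg]
  zero_mem' := by
    intro g hg
    rw [Matrix.mul_zero, Matrix.zero_mul]
  smul_mem' := by
    intro c X hX g hg
    rw [Matrix.mul_smul, Matrix.smul_mul, hX g hg]

lemma zeta_isPrimitiveRoot : IsPrimitiveRoot zeta 3 := by
  have h := Complex.isPrimitiveRoot_exp 3 (by norm_num)
  simpa [zeta] using h

/-- Membership in the commutant, read off entrywise at row index `(σ p, σ q)`. -/
lemma mem_commutant2_iff {d : ℕ} (X : Matrix (Fin d × Fin d) (Fin d × Fin d) ℂ) :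
    X ∈ commutant2 d ↔ ∀ (σ : Equiv.Perm (Fin d)) (α : Fin d → ZMod 3) (p q r s : Fin d),
      zeta ^ (α p).val * zeta ^ (α q).val * X (p, q) (r, s) =
        X (σ p, σ q) (σ r, σ s) * (zeta ^ (α r).val * zeta ^ (α s).val) := by
  have key : ∀ (g : Matrix (Fin d) (Fin d) ℂ) (σ : Equiv.Perm (Fin d)) (α : Fin d → ZMod 3),
      (∀ i k, g i k = if i = σ k then zeta ^ (α k).val else 0) → ∀ p q r s : Fin d,
      ((g ⊗ₖ g) * X) (σ p, σ q) (r, s) =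
        zeta ^ (α p).val * zeta ^ (α q).val * X (p, q) (r, s) ∧
      (X * (g ⊗ₖ g)) (σ p, σ q) (r, s) =
        X (σ p, σ q) (σ r, σ s) * (zeta ^ (α r).val * zeta ^ (α s).val) := by
    intro g σ α hg p q r s
    constructor
    · rw [Matrix.mul_apply, Fintype.sum_eq_single (p, q)]
      · simp [hg]
      · rintro ⟨a, b⟩ hab
        by_cases h : p = a
        · have h' : q ≠ b := fun h' => hab (by rw [h, h'])
          simp [hg, h']
        · simp [hg, h]
    · rw [Matrix.mul_apply, Fintype.sum_eq_single (σ r, σ s)]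
      · simp [hg]
      · rintro ⟨a, b⟩ hab
        by_cases h : a = σ r
        · have h' : b ≠ σ s := fun h' => hab (by rw [h, h'])
          simp [hg, h']
        · simp [hg, h]
  constructor
  · intro hX σ α p q r s
    obtain ⟨h1, h2⟩ := key (Matrix.of fun i k => if i = σ k then zeta ^ (α k).val else 0) σ α
      (fun _ _ => rfl) p q r s
    rw [← h1, ← h2]
    exact congrFun (congrFun (hX _ ⟨σ, α, fun _ _ => rfl⟩) _) _
  · rintro h g ⟨σ, α, hg⟩
    ext ⟨a, b⟩ ⟨r, s⟩
    obtain ⟨p, rfl⟩ := σ.surjective a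
    obtain ⟨q, rfl⟩ := σ.surjective b
    rw [(key g σ α hg p q r s).1, (key g σ α hg p q r s).2, h]

/-- Diagonal group elements kill every entry whose row and column indices differ as multisets. -/
lemma entry_eq_zero {d : ℕ} {X : Matrix (Fin d × Fin d) (Fin d × Fin d) ℂ}
    (hX : X ∈ commutant2 d) (p q r s : Fin d)
    (h1 : ¬(p = r ∧ q = s)) (h2 : ¬(p = s ∧ q = r)) : X (p, q) (r, s) = 0 := by
  have hz0 : zeta ≠ 0 := zeta_isPrimitiveRoot.ne_zero (by norm_num)
  have hz1 : zeta ≠ 1 := zeta_isPrimitiveRoot.ne_one (by norm_num)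
  have hz2 : zeta * zeta ≠ 1 := by
    rw [← pow_two]
    exact zeta_isPrimitiveRoot.pow_ne_one_of_pos_of_lt (by norm_num) (by norm_num)
  have hone : (1 : ZMod 3).val = 1 := rfl
  have hval : ∀ t u : Fin d, zeta ^ ((if u = t then 1 else 0 : ZMod 3)).val =
      if u = t then zeta else 1 := by
    intro t u
    split_ifs
    · rw [hone, pow_one]
    · simp
  -- The multiplicity of `t` in `{p,q}` and in `{r,s}` is compared for `t = p` and `t = q`.
  have hp := (mem_commutant2_iff X).1 hX 1 (fun u => if u = p then 1 else 0) p q r s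
  have hq := (mem_commutant2_iff X).1 hX 1 (fun u => if u = q then 1 else 0) p q r s
  simp only [hval, Equiv.Perm.one_apply, if_true, hone, pow_one] at hp hq
  generalize X (p, q) (r, s) = x at *
  by_contra hx
  have c : ∀ a b : ℂ, a * x = x * b → a = b := fun a b h =>
    mul_right_cancel₀ hx (h.trans (mul_comm x b))
  replace hp := c _ _ hp
  replace hq := c _ _ hq
  have hz3 : zeta * zeta ≠ zeta := fun h => hz1 (mul_left_cancel₀ hz0 (by rw [h, mul_one]))
  clear c hx hval hX
  grind

/-- Permutations act transitively on ordered pairs of distinct points. -/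
lemma exists_perm_pair {ι : Type*} [DecidableEq ι] {a b p q : ι} (hab : a ≠ b) (hpq : p ≠ q) :
    ∃ σ : Equiv.Perm ι, σ a = p ∧ σ b = q := by
  refine ⟨Equiv.swap (Equiv.swap a p b) q * Equiv.swap a p, ?_, ?_⟩
  · rw [Equiv.Perm.mul_apply, Equiv.swap_apply_left]
    refine Equiv.swap_apply_of_ne_of_ne (fun h => hab ?_) hpq
    apply (Equiv.swap a p).injective
    rw [Equiv.swap_apply_left, ← h]
  · rw [Equiv.Perm.mul_apply, Equiv.swap_apply_left]

/-- The matrix equal to `c 0`, `c 1`, `c 2` on the three orbits and zero elsewhere. -/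
def orbitMatrix (d : ℕ) (c : Fin 3 → ℂ) : Matrix (Fin d × Fin d) (Fin d × Fin d) ℂ :=
  fun x y => if x.1 = y.1 ∧ x.2 = y.2 then (if x.1 = x.2 then c 0 else c 1)
    else if x.1 = y.2 ∧ x.2 = y.1 then c 2 else 0

lemma orbitMatrix_mem (d : ℕ) (c : Fin 3 → ℂ) : orbitMatrix d c ∈ commutant2 d := by
  rw [mem_commutant2_iff]
  intro σ α p q r s
  simp only [orbitMatrix, σ.injective.eq_iff]
  by_cases h1 : p = r ∧ q = s
  · obtain ⟨rfl, rfl⟩ := h1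
    exact mul_comm _ _
  · by_cases h2 : p = s ∧ q = r
    · obtain ⟨rfl, rfl⟩ := h2
      rw [mul_comm, mul_comm (zeta ^ (α p).val)]
    · simp [h1, h2]

/-- Evaluation of a commuting matrix at one entry from each of the three orbits. -/
def orbitEval (n : ℕ) : commutant2 (n + 2) →ₗ[ℂ] (Fin 3 → ℂ) where
  toFun X := ![X.1 (0, 0) (0, 0), X.1 (0, 1) (0, 1), X.1 (0, 1) (1, 0)]
  map_add' X Y := by ext i; fin_cases i <;> simp
  map_smul' a X := by ext i; fin_cases i <;> simp

lemma orbitEval_bijective (n : ℕ) : Function.Bijective (orbitEval n) := by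
  constructor
  · rw [injective_iff_map_eq_zero]
    rintro ⟨X, hX⟩ h
    have e0 : X (0, 0) (0, 0) = 0 := congrFun h 0
    have e1 : X (0, 1) (0, 1) = 0 := congrFun h 1
    have e2 : X (0, 1) (1, 0) = 0 := congrFun h 2
    have inv : ∀ (σ : Equiv.Perm (Fin (n + 2))) (p q r s : Fin (n + 2)),
        X (p, q) (r, s) = X (σ p, σ q) (σ r, σ s) := fun σ p q r s => by
      simpa using (mem_commutant2_iff X).1 hX σ 0 p q r s
    rw [Submodule.mk_eq_zero]
    ext ⟨p, q⟩ ⟨r, s⟩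
    rw [Matrix.zero_apply]
    by_cases hpq : p = q
    · subst hpq
      by_cases h1 : p = r ∧ p = s
      · obtain ⟨rfl, rfl⟩ := h1
        have := inv (Equiv.swap 0 p) 0 0 0 0
        rwa [e0, Equiv.swap_apply_left, eq_comm] at this
      · exact entry_eq_zero hX p p r s h1 (fun h => h1 h.symm)
    · obtain ⟨σ, hp, hq⟩ := exists_perm_pair (zero_ne_one (α := Fin (n + 2))) hpq
      by_cases h1 : p = r ∧ q = s
      · obtain ⟨rfl, rfl⟩ := h1
        have := inv σ 0 1 0 1
        rwa [e1, hp, hq, eq_comm] at this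
      by_cases h2 : p = s ∧ q = r
      · obtain ⟨rfl, rfl⟩ := h2
        have := inv σ 0 1 1 0
        rwa [e2, hp, hq, eq_comm] at this
      exact entry_eq_zero hX p q r s h1 h2
  · intro c
    refine ⟨⟨orbitMatrix _ c, orbitMatrix_mem _ c⟩, ?_⟩
    ext i
    fin_cases i <;> simp [orbitEval, orbitMatrix]

/-- The commutant of the 2-fold tensor power of the monomial representation
has dimension exactly 3. -/
theorem finrank_commutant2_eq_three (d : ℕ) (hd : 2 ≤ d) :
    Module.finrank ℂ (commutant2 d) = 3 := by
  obtain ⟨n, rfl⟩ := Nat.exists_eq_add_of_le' hd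
  rw [(LinearEquiv.ofBijective (orbitEval n) (orbitEval_bijective n)).finrank_eq]
  simp
end

section
/- Let d ≥ 2 and let W be a d×d unitary matrix satisfying Tr((W^{⊗2}) P_t (W^{⊗2})† · P_t) = 2/(d(d+1)). Then the unitary 2-fold twirl decomposes into two consecutive orthogonal 2-fold twirls: for every d²×d² complex matrix M, ∫_{O(d)} ∫_{O(d)} ((W O'_ℂ W†)^{⊗2}) (O_ℂ^{⊗2} M (O_ℂ^{⊗2})†) ((W O'_ℂ W†)^{⊗2})† dμ_O(O) dμ_O(O') = ∫_{U(d)} U^{⊗2} M (U^{⊗2})† dμ_U(U). -/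
/-!
Write `F` for the swap operator, `P` for `Pt d`, `K = W ⊗ W`, and let `T_O`, `T_U` be the two-fold
twirls over `O(d)` and `U(d)`.

By invariance of Haar measure, `T_O M` commutes with all `O ⊗ O` and `T_U M` with all `U ⊗ U`. The
commutant of the `O ⊗ O` is spanned by `1`, `F` and `P` (`orthogonal_commutant`): sign changes and
permutation matrices reduce the entries of a commuting matrix to four values, and a single
Householder reflection mixing two basis vectors gives the remaining linear relation. The commutant
of the `U ⊗ U` is spanned by `1` and `F` (`unitary_commutant`). A twirl preserves the trace against
any operator commuting with the representation (`trace_mul_twirl`), so the coefficients can be found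
by pairing with `1`, `F`, and, for `T_O`, `P`.

The double orthogonal twirl of `M` is `K T_O(K† T_O(M) K) K†`. Writing `T_O M = a + b F + c P` and
`T_O(K† T_O(M) K) = a' + b' F + c' P`, the three trace pairings and the hypothesis
`tr (K P K† P) = 2 / (d (d + 1))` force `c' = 0` (`third_coeff_zero`). Hence the double twirl is
`a' + b' F`, which commutes with `K`; it has the same traces against `1` and `F` as `M`, and these
determine `T_U M` among the combinations of `1` and `F`, because `d ≥ 2` (`double_twirl`).
-/

open Matrix MeasureTheory
open scoped Kronecker

/-- The rank-one projection onto the normalized maximally entangled vector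
`ψ = (1/√d) Σ_j e_j ⊗ e_j`, as a `d²×d²` matrix. -/
noncomputable def Pt (d : ℕ) : Matrix (Fin d × Fin d) (Fin d × Fin d) ℂ :=
  fun p q => if p.1 = p.2 ∧ q.1 = q.2 then (1 : ℂ) / d else 0

/-- Coercion of a real matrix to a complex matrix, entrywise. -/
def oc {d : ℕ} (O : Matrix (Fin d) (Fin d) ℝ) : Matrix (Fin d) (Fin d) ℂ :=
  O.map Complex.ofReal

noncomputable instance (d : ℕ) : MeasurableSpace (Matrix.unitaryGroup (Fin d) ℂ) :=
  borel _

noncomputable instance (d : ℕ) : MeasurableSpace (Matrix.orthogonalGroup (Fin d) ℝ) :=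
  borel _


/-! ### The swap operator and the projection `Pt` -/

/-- The swap (flip) operator `x ⊗ y ↦ y ⊗ x` on `ℂ^d ⊗ ℂ^d`. -/
def swapM (d : ℕ) : Matrix (Fin d × Fin d) (Fin d × Fin d) ℂ :=
  fun p q => if p = q.swap then 1 else 0

section Algebra

variable {d : ℕ}

lemma swapM_mul (X : Matrix (Fin d × Fin d) (Fin d × Fin d) ℂ) (p q : Fin d × Fin d) :
    (swapM d * X) p q = X p.swap q := by
  have h : ∀ x : Fin d × Fin d, p = x.swap ↔ p.swap = x := fun x =>
    ⟨fun h => by rw [h, Prod.swap_swap], fun h => by rw [← h, Prod.swap_swap]⟩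
  simp [Matrix.mul_apply, swapM, h]

lemma mul_swapM (X : Matrix (Fin d × Fin d) (Fin d × Fin d) ℂ) (p q : Fin d × Fin d) :
    (X * swapM d) p q = X p q.swap := by
  simp [Matrix.mul_apply, swapM]

lemma swapM_comm (A : Matrix (Fin d) (Fin d) ℂ) : Commute (swapM d) (A ⊗ₖ A) := by
  ext p q
  rw [swapM_mul, mul_swapM]
  simp [mul_comm]

lemma swapM_mul_swapM : swapM d * swapM d = 1 := by
  ext p q
  rw [swapM_mul]
  simp [swapM, Matrix.one_apply, Prod.swap_inj]

lemma swapM_mul_Pt : swapM d * Pt d = Pt d := by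
  ext p q
  rw [swapM_mul]
  simp [Pt, eq_comm]

lemma trace_swapM : (swapM d).trace = d := by
  have h : ∀ a b : Fin d, ((a, b) = (b, a)) ↔ a = b := fun a b =>
    ⟨fun h => (Prod.mk.inj h).1, fun h => by rw [h]⟩
  simp only [Matrix.trace, Matrix.diag_apply, swapM, Fintype.sum_prod_type, Prod.swap_prod_mk, h]
  simp

lemma trace_Pt (hd : d ≠ 0) : (Pt d).trace = 1 := by
  simp [Matrix.trace, Pt, Fintype.sum_prod_type, hd]

lemma Pt_mul_Pt (hd : d ≠ 0) : Pt d * Pt d = Pt d := by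
  ext p q
  by_cases h1 : p.1 = p.2 <;> by_cases h2 : q.1 = q.2 <;>
    simp [Matrix.mul_apply, Pt, Fintype.sum_prod_type, h1, h2, hd]

lemma trace_one_prod : (1 : Matrix (Fin d × Fin d) (Fin d × Fin d) ℂ).trace = (d : ℂ) ^ 2 := by
  simp [sq]

/-- `Pt` commutes with `A ⊗ A` when `A Aᵀ = Aᵀ A = 1`: it is a multiple of `v vᵀ` with
`v = Σ_j e_j ⊗ e_j`, and such `A ⊗ A` and its transpose both fix `v`. -/
lemma Pt_comm {A : Matrix (Fin d) (Fin d) ℂ} (h1 : A * Aᵀ = 1) (h2 : Aᵀ * A = 1) :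
    Commute (Pt d) (A ⊗ₖ A) := by
  ext p q
  have e1 := congrFun (congrFun h2 q.1) q.2
  have e2 := congrFun (congrFun h1 p.1) p.2
  simp only [Matrix.mul_apply, Matrix.transpose_apply, Matrix.one_apply] at e1 e2
  have l : (Pt d * (A ⊗ₖ A)) p q
      = (if p.1 = p.2 then (1 : ℂ) / d else 0) * ∑ x, A x q.1 * A x q.2 := by
    by_cases h : p.1 = p.2 <;>
      simp [Matrix.mul_apply, Pt, Fintype.sum_prod_type, h, Finset.mul_sum]
  have r : ((A ⊗ₖ A) * Pt d) p q
      = (∑ x, A p.1 x * A p.2 x) * (if q.1 = q.2 then (1 : ℂ) / d else 0) := by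
    by_cases h : q.1 = q.2 <;>
      simp [Matrix.mul_apply, Pt, Fintype.sum_prod_type, h, Finset.sum_mul]
  rw [l, r, e1, e2]
  by_cases h : p.1 = p.2 <;> by_cases h' : q.1 = q.2 <;> simp [h, h']

lemma oc_mul (A B : Matrix (Fin d) (Fin d) ℝ) : oc (A * B) = oc A * oc B :=
  Matrix.map_mul (f := Complex.ofRealHom)

lemma oc_one : oc (1 : Matrix (Fin d) (Fin d) ℝ) = 1 := by
  ext i j
  by_cases h : i = j <;> simp [oc, Matrix.one_apply, h]

lemma oc_transpose (A : Matrix (Fin d) (Fin d) ℝ) : (oc A)ᵀ = oc Aᵀ := rfl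

lemma oc_conjTranspose (A : Matrix (Fin d) (Fin d) ℝ) : (oc A)ᴴ = (oc A)ᵀ := by
  ext i j
  simp [oc]

lemma oc_mul_transpose {O : Matrix (Fin d) (Fin d) ℝ} (hO : O ∈ Matrix.orthogonalGroup (Fin d) ℝ) :
    oc O * (oc O)ᵀ = 1 ∧ (oc O)ᵀ * oc O = 1 := by
  rw [oc_transpose, ← oc_mul, ← oc_mul, (Matrix.mem_orthogonalGroup_iff _ _).1 hO,
    (Matrix.mem_orthogonalGroup_iff' _ _).1 hO, oc_one]
  exact ⟨rfl, rfl⟩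

lemma oc_mem {O : Matrix (Fin d) (Fin d) ℝ} (hO : O ∈ Matrix.orthogonalGroup (Fin d) ℝ) :
    oc O ∈ Matrix.unitaryGroup (Fin d) ℂ := by
  rw [Matrix.mem_unitaryGroup_iff, Matrix.star_eq_conjTranspose, oc_conjTranspose]
  exact (oc_mul_transpose hO).1

end Algebra

/-! ### The commutant of `O ⊗ O` -/

section Commutant

variable {d : ℕ} {X : Matrix (Fin d × Fin d) (Fin d × Fin d) ℂ}

/-- Commutation with the sign change of the `k`-th basis vector: each entry of `X` in which `k`
occurs an odd number of times vanishes. -/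
lemma sign_entry
    (hX : ∀ O ∈ Matrix.orthogonalGroup (Fin d) ℝ, Commute X (oc O ⊗ₖ oc O)) (k a b c e : Fin d) :
    X (a, b) (c, e) * ((if c = k then -1 else 1) * (if e = k then -1 else 1))
      = ((if a = k then -1 else 1) * (if b = k then -1 else 1)) * X (a, b) (c, e) := by
  have hO : Matrix.diagonal (fun x : Fin d => if x = k then (-1 : ℝ) else 1)
      ∈ Matrix.orthogonalGroup (Fin d) ℝ := by
    rw [Matrix.mem_orthogonalGroup_iff, Matrix.diagonal_transpose,
      Matrix.diagonal_mul_diagonal, ← Matrix.diagonal_one]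
    congr 1
    ext x
    by_cases h : x = k <;> simp [h]
  have h := congrFun (congrFun (hX _ hO) (a, b)) (c, e)
  have hoc : oc (Matrix.diagonal (fun x : Fin d => if x = k then (-1 : ℝ) else 1))
      = Matrix.diagonal (fun x : Fin d => if x = k then (-1 : ℂ) else 1) := by
    rw [oc, Matrix.diagonal_map (by simp)]
    congr 1
    ext x
    by_cases h : x = k <;> simp [h]
  rw [hoc, Matrix.diagonal_kronecker_diagonal, Matrix.mul_diagonal, Matrix.diagonal_mul] at h
  exact h

/-- Commutation with permutation matrices: entries of `X` are invariant under permuting indices. -/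
lemma perm_entry
    (hX : ∀ O ∈ Matrix.orthogonalGroup (Fin d) ℝ, Commute X (oc O ⊗ₖ oc O))
    (σ : Equiv.Perm (Fin d)) (a b c e : Fin d) :
    X (σ a, σ b) (σ c, σ e) = X (a, b) (c, e) := by
  have hO : (Matrix.of fun x y : Fin d => if x = σ y then (1 : ℝ) else 0)
      ∈ Matrix.orthogonalGroup (Fin d) ℝ := by
    rw [Matrix.mem_orthogonalGroup_iff']
    ext x y
    simp [Matrix.mul_apply, Matrix.one_apply, eq_comm]
  have h := congrFun (congrFun (hX _ hO) (σ a, σ b)) (c, e)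
  have hoc : ∀ x y, oc (Matrix.of fun x y : Fin d => if x = σ y then (1 : ℝ) else 0) x y
      = if x = σ y then (1 : ℂ) else 0 := by
    intro x y
    by_cases h : x = σ y <;> simp [oc, h]
  simpa [Matrix.mul_apply, hoc, Fintype.sum_prod_type, ite_mul, mul_ite, Finset.sum_ite_irrel]
    using h

/-- An orthogonal matrix (a Householder reflection) with two nonzero entries in one row. -/
lemma exists_orthogonal_mixing {i j : Fin d} (hij : i ≠ j) :
    ∃ O ∈ Matrix.orthogonalGroup (Fin d) ℝ, O i i ≠ 0 ∧ O i j ≠ 0 := by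
  set v : Fin d → ℝ := Pi.single i 1 + Pi.single j 2 with hv
  have hvv : v ⬝ᵥ v = 5 := by
    simp [hv, dotProduct_add, hij]
    norm_num
  refine ⟨1 - (2 / 5 : ℝ) • Matrix.vecMulVec v v, ?_, ?_, ?_⟩
  · rw [Matrix.mem_orthogonalGroup_iff]
    have ht : (1 - (2 / 5 : ℝ) • Matrix.vecMulVec v v)ᵀ
        = 1 - (2 / 5 : ℝ) • Matrix.vecMulVec v v := by
      ext x y
      simp [Matrix.vecMulVec_apply, Matrix.one_apply, eq_comm, mul_comm]
    rw [ht, sub_mul, mul_sub, mul_sub, smul_mul_smul_comm, Matrix.vecMulVec_mul_vecMulVec, hvv]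
    ext x y
    simp [Matrix.vecMulVec_apply]
    ring
  · simp [hv, Matrix.vecMulVec_apply, hij]
    norm_num
  · simp [hv, Matrix.vecMulVec_apply, hij]

/-- Two distinct points of `Fin d` can be moved to any two distinct points. -/
lemma exists_perm_pair_s16 {i j a b : Fin d} (hij : i ≠ j) (hab : a ≠ b) :
    ∃ σ : Equiv.Perm (Fin d), σ i = a ∧ σ j = b := by
  refine ⟨Equiv.swap i a |>.trans (Equiv.swap ((Equiv.swap i a) j) b), ?_, ?_⟩
  · have : (Equiv.swap i a) j ≠ a := by
      intro h
      have := congrArg (Equiv.swap i a) h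
      simp at this
      exact hij this.symm
    simp [Equiv.swap_apply_of_ne_of_ne this.symm hab]
  · simp

/-- The commutant of all `O ⊗ O`, `O` real orthogonal, is spanned by `1`, the swap and `Pt`. -/
lemma orthogonal_commutant (hd : 2 ≤ d)
    (hX : ∀ O ∈ Matrix.orthogonalGroup (Fin d) ℝ, Commute X (oc O ⊗ₖ oc O)) :
    ∃ a b c : ℂ, X = a • 1 + b • swapM d + c • Pt d := by
  have hd0 : (d : ℂ) ≠ 0 := by
    have : d ≠ 0 := by omega
    exact_mod_cast this
  obtain ⟨i, j, hij⟩ : ∃ i j : Fin d, i ≠ j :=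
    ⟨⟨0, by omega⟩, ⟨1, by omega⟩, by simp [Fin.ext_iff]⟩
  set α := X (i, i) (i, i)
  set β := X (i, j) (i, j)
  set δ := X (i, j) (j, i)
  set γ := X (i, i) (j, j)
  set κ := α - β - δ - γ with hκ
  -- Signs and permutations leave one spurious direction `D`, the diagonal projection onto the
  -- span of the `e_x ⊗ e_x`.
  set D : Matrix (Fin d × Fin d) (Fin d × Fin d) ℂ :=
    Matrix.diagonal fun p => if p.1 = p.2 then 1 else 0 with hD
  have hXD : X = β • 1 + δ • swapM d + (d * γ) • Pt d + κ • D := by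
    have key : ∀ a b c e, X (a, b) (c, e) =
        β * (if a = c ∧ b = e then 1 else 0) + δ * (if a = e ∧ b = c then 1 else 0)
        + γ * (if a = b ∧ c = e then 1 else 0)
        + κ * (if a = c ∧ b = e ∧ a = b then 1 else 0) := by
      intro a b c e
      by_cases hab : a = b
      · subst hab
        by_cases hce : c = e
        · subst hce
          by_cases hac : a = c
          · subst hac
            have := perm_entry hX (Equiv.swap i a) i i i i
            simp only [Equiv.swap_apply_left] at this
            simp [this, hκ, α]
          · obtain ⟨σ, h1, h2⟩ := exists_perm_pair_s16 hij hac
            have := perm_entry hX σ i i j j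
            rw [h1, h2] at this
            simp [this, hac, γ]
        · have h := sign_entry hX c a a c e
          have : X (a, a) (c, e) = 0 := by
            have hec : e ≠ c := fun h => hce h.symm
            by_cases hac : a = c <;> simp only [hac, hec, if_true, if_false] at h ⊢ <;>
              linear_combination -h / 2
          rw [this]
          have h1 : ¬ (a = c ∧ a = e) := by rintro ⟨rfl, rfl⟩; exact hce rfl
          have h2 : ¬ (a = e ∧ a = c) := by rintro ⟨rfl, rfl⟩; exact hce rfl
          simp [hce, h1, h2]
      · have hba : b ≠ a := fun h => hab h.symm
        obtain ⟨σ, h1, h2⟩ := exists_perm_pair_s16 hij hab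
        by_cases h : a = c ∧ b = e
        · obtain ⟨rfl, rfl⟩ := h
          have := perm_entry hX σ i j i j
          rw [h1, h2] at this
          simp [this, hab, β]
        by_cases h' : a = e ∧ b = c
        · obtain ⟨rfl, rfl⟩ := h'
          have := perm_entry hX σ i j j i
          rw [h1, h2] at this
          simp [this, hab, δ]
        have : X (a, b) (c, e) = 0 := by
          have ha := sign_entry hX a a b c e
          have hb := sign_entry hX b a b c e
          by_cases hc : c = a ∨ e = a
          · have e1 : c ≠ b := by rintro rfl; grind
            have e2 : e ≠ b := by rintro rfl; grind
            simp only [e1, e2, hab, if_true, if_false] at hb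
            linear_combination hb / 2
          · rw [not_or] at hc
            simp only [hc.1, hc.2, hba, if_true, if_false] at ha
            linear_combination ha / 2
        rw [this]
        simp [h, h', hab]
    ext ⟨a, b⟩ ⟨c, e⟩
    rw [key]
    simp only [Matrix.add_apply, Matrix.smul_apply, smul_eq_mul, hD, Matrix.diagonal_apply,
      Matrix.one_apply, Prod.mk.injEq, swapM, Prod.swap_prod_mk, Pt]
    have e1 : (d * γ) * (if a = b ∧ c = e then (1 : ℂ) / d else 0)
        = γ * (if a = b ∧ c = e then 1 else 0) := by
      split_ifs
      · field_simp
      · simp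
    have e2 : (if a = c ∧ b = e then (if a = b then (1 : ℂ) else 0) else 0)
        = if a = c ∧ b = e ∧ a = b then 1 else 0 := by
      simp only [← ite_and, and_assoc]
    rw [e1, e2]
  have hκ0 : κ = 0 := by
    obtain ⟨O, hO, hii, hjj⟩ := exists_orthogonal_mixing hij
    obtain ⟨t1, t2⟩ := oc_mul_transpose hO
    have hcomm : Commute (κ • D) (oc O ⊗ₖ oc O) := by
      have : κ • D = X - (β • 1 + δ • swapM d + (d * γ) • Pt d) := by
        rw [hXD]
        simp
      rw [this]
      exact (hX O hO).sub_left ((((Commute.one_left _).smul_left _).add_left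
        ((swapM_comm _).smul_left _)).add_left ((Pt_comm t1 t2).smul_left _))
    have h := congrFun (congrFun hcomm (i, i)) (i, j)
    rw [Matrix.smul_mul, Matrix.mul_smul, Matrix.smul_apply, Matrix.smul_apply, hD,
      Matrix.diagonal_mul, Matrix.mul_diagonal] at h
    simpa [hij, oc, hii, hjj] using h
  exact ⟨β, δ, d * γ, by rw [hXD, hκ0]; simp⟩

end Commutant

/-- Operators commuting with every `U ⊗ U`, `U` unitary, are combinations of `1` and the swap: they
lie in the commutant of the orthogonal group, and a phase on one basis vector, which moves `Pt`,
excludes the third direction. -/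
lemma unitary_commutant {d : ℕ} {X : Matrix (Fin d × Fin d) (Fin d × Fin d) ℂ} (hd : 2 ≤ d)
    (hX : ∀ U ∈ Matrix.unitaryGroup (Fin d) ℂ, Commute X (U ⊗ₖ U)) :
    ∃ a b : ℂ, X = a • 1 + b • swapM d := by
  obtain ⟨a, b, c, h⟩ := orthogonal_commutant hd fun O hO => hX _ (oc_mem hO)
  have hd0 : (d : ℂ) ≠ 0 := by
    have : d ≠ 0 := by omega
    exact_mod_cast this
  obtain ⟨i, j, hij⟩ : ∃ i j : Fin d, i ≠ j :=
    ⟨⟨0, by omega⟩, ⟨1, by omega⟩, by simp [Fin.ext_iff]⟩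
  set V : Matrix (Fin d) (Fin d) ℂ :=
    Matrix.diagonal fun x => if x = i then Complex.I else 1 with hV
  have hVu : V ∈ Matrix.unitaryGroup (Fin d) ℂ := by
    rw [Matrix.mem_unitaryGroup_iff, Matrix.star_eq_conjTranspose, hV,
      Matrix.diagonal_conjTranspose, Matrix.diagonal_mul_diagonal, ← Matrix.diagonal_one]
    congr 1
    ext x
    by_cases h : x = i <;> simp [h]
  have hcomm : Commute (c • Pt d) (V ⊗ₖ V) := by
    have : c • Pt d = X - (a • 1 + b • swapM d) := by
      rw [h]
      simp
    rw [this]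
    exact (hX V hVu).sub_left (((Commute.one_left _).smul_left _).add_left
      ((swapM_comm _).smul_left _))
  have e := congrFun (congrFun hcomm (i, i)) (j, j)
  rw [hV, Matrix.diagonal_kronecker_diagonal, Matrix.mul_diagonal, Matrix.diagonal_mul] at e
  have hc : c = 0 := by
    simp [Pt, hij.symm] at e
    field_simp at e
    linear_combination e / 2
  exact ⟨a, b, by rw [h, hc]; simp⟩

/-! ### Twirls -/

section Twirl

variable {G n : Type*} [MeasurableSpace G] [Fintype n]

/-- The integral of `L (F g)` is `L` of the entrywise integral of `F`. -/
lemma integral_linear [DecidableEq n] {μ : Measure G} {F : G → Matrix n n ℂ}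
    (hF : ∀ p q, Integrable (fun g => F g p q) μ) (L : Matrix n n ℂ →ₗ[ℂ] ℂ) :
    ∫ g, L (F g) ∂μ = L (Matrix.of fun p q => ∫ g, F g p q ∂μ) := by
  have hL : ∀ A : Matrix n n ℂ, L A = ∑ p, ∑ q, A p q * L (Matrix.single p q 1) := by
    intro A
    conv_lhs => rw [Matrix.matrix_eq_sum_single A]
    simp only [map_sum]
    refine Finset.sum_congr rfl fun p _ => Finset.sum_congr rfl fun q _ => ?_
    rw [← smul_eq_mul, ← map_smul, Matrix.smul_single, smul_eq_mul, mul_one]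
  rw [hL]
  simp_rw [hL (F _)]
  rw [integral_finsetSum _ fun p _ => integrable_finsetSum _ fun q _ => (hF p q).mul_const _]
  refine Finset.sum_congr rfl fun p _ => ?_
  rw [integral_finsetSum _ fun q _ => (hF p q).mul_const _]
  exact Finset.sum_congr rfl fun q _ => integral_mul_const _ _

/-- The twirl `∫ ρ(g) M ρ(g)† dμ(g)` of `M`, computed entrywise. -/
noncomputable def twirl (μ : Measure G) (ρ : G → Matrix n n ℂ) (M : Matrix n n ℂ) :
    Matrix n n ℂ :=
  Matrix.of fun p q => ∫ g, (ρ g * M * (ρ g)ᴴ) p q ∂μ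

/-- The functional `X ↦ (A X B)_{pq}`. -/
def entryL (A B : Matrix n n ℂ) (p q : n) : Matrix n n ℂ →ₗ[ℂ] ℂ where
  toFun X := (A * X * B) p q
  map_add' X Y := by simp [mul_add, add_mul]
  map_smul' c X := by simp

/-- The functional `X ↦ tr (A X)`. -/
def traceL (A : Matrix n n ℂ) : Matrix n n ℂ →ₗ[ℂ] ℂ where
  toFun X := (A * X).trace
  map_add' X Y := by simp [mul_add]
  map_smul' c X := by simp

variable [DecidableEq n] [TopologicalSpace G] [OpensMeasurableSpace G]
  {μ : Measure G} [IsProbabilityMeasure μ] {ρ : G → Matrix n n ℂ}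

lemma integrable_twirl (hc : Continuous ρ) (hu : ∀ g, ρ g ∈ Matrix.unitaryGroup n ℂ)
    (M : Matrix n n ℂ) (p q : n) : Integrable (fun g => (ρ g * M * (ρ g)ᴴ) p q) μ := by
  have hcont : Continuous fun g => (ρ g * M * (ρ g)ᴴ) p q :=
    ((hc.matrix_mul continuous_const).matrix_mul hc.matrix_conjTranspose).matrix_elem p q
  refine Integrable.of_bound hcont.aestronglyMeasurable (∑ j, ∑ i, ‖M i j‖)
    (Filter.Eventually.of_forall fun g => ?_)
  rw [Matrix.mul_apply]
  refine (norm_sum_le _ _).trans (Finset.sum_le_sum fun j _ => ?_)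
  have hb := fun i j => entry_norm_bound_of_unitary (hu g) i j
  rw [norm_mul, Matrix.conjTranspose_apply, norm_star]
  refine (mul_le_of_le_one_right (norm_nonneg _) (hb q j)).trans ?_
  rw [Matrix.mul_apply]
  refine (norm_sum_le _ _).trans (Finset.sum_le_sum fun i _ => ?_)
  rw [norm_mul]
  exact mul_le_of_le_one_left (norm_nonneg _) (hb p i)

lemma integral_mul_twirl (hc : Continuous ρ) (hu : ∀ g, ρ g ∈ Matrix.unitaryGroup n ℂ)
    (A B M : Matrix n n ℂ) (p q : n) :
    ∫ g, (A * (ρ g * M * (ρ g)ᴴ) * B) p q ∂μ = (A * twirl μ ρ M * B) p q :=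
  integral_linear (integrable_twirl hc hu M) (entryL A B p q)

/-- A twirl preserves the pairing with any operator commuting with the representation. -/
lemma trace_mul_twirl (hc : Continuous ρ) (hu : ∀ g, ρ g ∈ Matrix.unitaryGroup n ℂ)
    {A : Matrix n n ℂ} (hA : ∀ g, Commute A (ρ g)) (M : Matrix n n ℂ) :
    (A * twirl μ ρ M).trace = (A * M).trace := by
  have h : ∫ g, (A * (ρ g * M * (ρ g)ᴴ)).trace ∂μ = (A * twirl μ ρ M).trace :=
    integral_linear (integrable_twirl hc hu M) (traceL A)
  rw [← h]
  have hconst : ∀ g, (A * (ρ g * M * (ρ g)ᴴ)).trace = (A * M).trace := by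
    intro g
    have hg : (ρ g)ᴴ * ρ g = 1 := Matrix.mem_unitaryGroup_iff'.1 (hu g)
    rw [← mul_assoc, ← mul_assoc, (hA g).eq, Matrix.trace_mul_comm, ← mul_assoc, ← mul_assoc, hg,
      one_mul]
  simp [hconst]

/-- Twirls over a group commute with the representation, by invariance of the measure. -/
lemma twirl_commute [Group G] [MeasurableMul G] [μ.IsMulLeftInvariant] (hc : Continuous ρ)
    (hu : ∀ g, ρ g ∈ Matrix.unitaryGroup n ℂ) (hm : ∀ g h, ρ (g * h) = ρ g * ρ h)
    (M : Matrix n n ℂ) (h : G) : Commute (twirl μ ρ M) (ρ h) := by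
  have inv : ρ h * twirl μ ρ M * (ρ h)ᴴ = twirl μ ρ M := by
    ext p q
    rw [← integral_mul_twirl hc hu]
    have := integral_mul_left_eq_self (μ := μ) (fun g => (ρ g * M * (ρ g)ᴴ) p q) h
    rw [twirl, Matrix.of_apply, ← this]
    simp only [hm, Matrix.conjTranspose_mul, mul_assoc]
  have hh : (ρ h)ᴴ * ρ h = 1 := Matrix.mem_unitaryGroup_iff'.1 (hu h)
  have : ρ h * twirl μ ρ M = twirl μ ρ M * ρ h := by
    conv_rhs => rw [← inv]
    rw [mul_assoc _ (ρ h)ᴴ, hh, mul_one]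
  exact this.symm

end Twirl

/-! ### The two-fold twirls -/

section TwoFold

variable {d : ℕ}

instance : BorelSpace (Matrix.unitaryGroup (Fin d) ℂ) := ⟨rfl⟩

instance : BorelSpace (Matrix.orthogonalGroup (Fin d) ℝ) := ⟨rfl⟩

/-- The representation `U ↦ U ⊗ U` of `U(d)`. -/
def rhoU (U : Matrix.unitaryGroup (Fin d) ℂ) : Matrix (Fin d × Fin d) (Fin d × Fin d) ℂ :=
  (U : Matrix (Fin d) (Fin d) ℂ) ⊗ₖ (U : Matrix (Fin d) (Fin d) ℂ)

/-- The representation `O ↦ O ⊗ O` of `O(d)` on complex tensors. -/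
def rhoO (O : Matrix.orthogonalGroup (Fin d) ℝ) : Matrix (Fin d × Fin d) (Fin d × Fin d) ℂ :=
  oc (O : Matrix (Fin d) (Fin d) ℝ) ⊗ₖ oc (O : Matrix (Fin d) (Fin d) ℝ)

lemma continuous_kronecker_self {G : Type*} [TopologicalSpace G] {f : G → Matrix (Fin d) (Fin d) ℂ}
    (hf : Continuous f) : Continuous fun g => f g ⊗ₖ f g :=
  continuous_matrix fun p q => (hf.matrix_elem p.1 q.1).mul (hf.matrix_elem p.2 q.2)

lemma continuous_rhoU : Continuous (rhoU (d := d)) :=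
  continuous_kronecker_self continuous_subtype_val

lemma continuous_rhoO : Continuous (rhoO (d := d)) :=
  continuous_kronecker_self (continuous_subtype_val.matrix_map Complex.continuous_ofReal)

lemma rhoU_mem (U : Matrix.unitaryGroup (Fin d) ℂ) : rhoU U ∈ Matrix.unitaryGroup _ ℂ :=
  Matrix.kronecker_mem_unitary U.2 U.2

lemma rhoO_mem (O : Matrix.orthogonalGroup (Fin d) ℝ) : rhoO O ∈ Matrix.unitaryGroup _ ℂ :=
  Matrix.kronecker_mem_unitary (oc_mem O.2) (oc_mem O.2)

lemma rhoU_mul (U V : Matrix.unitaryGroup (Fin d) ℂ) : rhoU (U * V) = rhoU U * rhoU V :=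
  Matrix.mul_kronecker_mul _ _ _ _

lemma rhoO_mul (O Q : Matrix.orthogonalGroup (Fin d) ℝ) : rhoO (O * Q) = rhoO O * rhoO Q := by
  rw [rhoO, rhoO, rhoO, ← Matrix.mul_kronecker_mul, ← oc_mul]
  rfl

lemma twirl_rhoO (hd : 2 ≤ d) (μ : Measure (Matrix.orthogonalGroup (Fin d) ℝ)) [μ.IsHaarMeasure]
    [IsProbabilityMeasure μ] (M : Matrix (Fin d × Fin d) (Fin d × Fin d) ℂ) :
    ∃ a b c : ℂ, twirl μ rhoO M = a • 1 + b • swapM d + c • Pt d :=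
  orthogonal_commutant hd fun O hO =>
    twirl_commute continuous_rhoO rhoO_mem rhoO_mul M ⟨O, hO⟩

lemma twirl_rhoU (hd : 2 ≤ d) (μ : Measure (Matrix.unitaryGroup (Fin d) ℂ)) [μ.IsHaarMeasure]
    [IsProbabilityMeasure μ] (M : Matrix (Fin d × Fin d) (Fin d × Fin d) ℂ) :
    ∃ a b : ℂ, twirl μ rhoU M = a • 1 + b • swapM d :=
  unitary_commutant hd fun U hU =>
    twirl_commute continuous_rhoU rhoU_mem rhoU_mul M ⟨U, hU⟩

/-- The traces of `X = a + b F + c Pt` against `1`, the swap `F` and `Pt`. -/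
lemma traces_of_eq (hd : d ≠ 0) {X : Matrix (Fin d × Fin d) (Fin d × Fin d) ℂ} {a b c : ℂ}
    (hX : X = a • 1 + b • swapM d + c • Pt d) :
    X.trace = a * d ^ 2 + b * d + c ∧ (swapM d * X).trace = a * d + b * d ^ 2 + c ∧
      (Pt d * X).trace = a + b + c := by
  have hPF : (Pt d * swapM d).trace = 1 := by
    rw [Matrix.trace_mul_comm, swapM_mul_Pt, trace_Pt hd]
  subst hX
  simp only [mul_add, Matrix.mul_smul, Matrix.trace_add, Matrix.trace_smul, trace_one_prod,
    trace_swapM, trace_Pt hd, mul_one, swapM_mul_swapM, swapM_mul_Pt, Pt_mul_Pt hd, hPF,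
    smul_eq_mul, and_self]

/-- For `d ≥ 2` the coefficients of `1` and the swap are determined by the traces against them. -/
lemma coeffs_unique {x y : ℂ} (hd : 2 ≤ d) (h1 : x * d ^ 2 + y * d = 0)
    (h2 : x * d + y * d ^ 2 = 0) : x = 0 ∧ y = 0 := by
  have hd0 : (d : ℂ) ≠ 0 := by
    have : d ≠ 0 := by omega
    exact_mod_cast this
  have hdm : (d : ℂ) - 1 ≠ 0 := by
    rw [sub_ne_zero]
    have : d ≠ 1 := by omega
    exact_mod_cast this
  have hdp : (d : ℂ) + 1 ≠ 0 := by exact_mod_cast d.succ_ne_zero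
  have hD : (d : ℂ) ^ 2 * (d - 1) * (d + 1) ≠ 0 :=
    mul_ne_zero (mul_ne_zero (pow_ne_zero _ hd0) hdm) hdp
  constructor <;> apply (mul_eq_zero_iff_left hD).1
  · linear_combination d ^ 2 * h1 - d * h2
  · linear_combination d ^ 2 * h2 - d * h1

/-- The linear algebra behind the trace hypothesis: `c` and `c'` are the `Pt`-coefficients before
and after the second orthogonal twirl, and `x`, `y` the changes of the other two coefficients. The
value `2 / (d (d + 1))` is the one for which `c'` vanishes. -/
lemma third_coeff_zero {x y c c' : ℂ} (hd : 2 ≤ d) (h1 : x * d ^ 2 + y * d + c' = c)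
    (h2 : x * d + y * d ^ 2 + c' = c) (h3 : x + y + c' = c * (2 / (d * (d + 1)))) : c' = 0 := by
  have hd0 : (d : ℂ) ≠ 0 := by
    have : d ≠ 0 := by omega
    exact_mod_cast this
  have hdm : (d : ℂ) - 1 ≠ 0 := by
    rw [sub_ne_zero]
    have : d ≠ 1 := by omega
    exact_mod_cast this
  have hdp : (d : ℂ) + 1 ≠ 0 := by exact_mod_cast d.succ_ne_zero
  have hd2 : (d : ℂ) + 2 ≠ 0 := by exact_mod_cast (d + 1).succ_ne_zero
  have hxy : x = y := by
    rw [← sub_eq_zero]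
    apply (mul_eq_zero_iff_left (mul_ne_zero hd0 hdm)).1
    linear_combination h1 - h2
  subst hxy
  have h3' : (2 * x + c') * (d * (d + 1)) = 2 * c := by
    field_simp at h3
    linear_combination h3
  apply (mul_eq_zero_iff_left (mul_ne_zero hdm hd2)).1
  linear_combination h3' - 2 * h1

/-- The double orthogonal twirl, the second one conjugated by `W`, is the unitary twirl. -/
lemma double_twirl (hd : 2 ≤ d)
    {W : Matrix (Fin d) (Fin d) ℂ} (hW : W ∈ Matrix.unitaryGroup (Fin d) ℂ)
    (htr : ((W ⊗ₖ W) * Pt d * (W ⊗ₖ W)ᴴ * Pt d).trace = (2 / (d * (d + 1)) : ℂ))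
    (μO : Measure (Matrix.orthogonalGroup (Fin d) ℝ))
    [μO.IsHaarMeasure] [IsProbabilityMeasure μO]
    (μU : Measure (Matrix.unitaryGroup (Fin d) ℂ))
    [μU.IsHaarMeasure] [IsProbabilityMeasure μU]
    (M : Matrix (Fin d × Fin d) (Fin d × Fin d) ℂ) :
    (W ⊗ₖ W) * twirl μO rhoO ((W ⊗ₖ W)ᴴ * twirl μO rhoO M * (W ⊗ₖ W)) * (W ⊗ₖ W)ᴴ
      = twirl μU rhoU M := by
  have hd0 : d ≠ 0 := by omega
  set K := W ⊗ₖ W with hK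
  have hKu : K ∈ Matrix.unitaryGroup _ ℂ := Matrix.kronecker_mem_unitary hW hW
  have k1 : K * Kᴴ = 1 := Matrix.mem_unitaryGroup_iff.1 hKu
  have k2 : Kᴴ * K = 1 := Matrix.mem_unitaryGroup_iff'.1 hKu
  have hF : Commute (swapM d) K := swapM_comm W
  have hF' : Commute (swapM d) Kᴴ := by
    rw [hK, Matrix.conjTranspose_kronecker]
    exact swapM_comm Wᴴ
  set Y := Kᴴ * twirl μO rhoO M * K with hY
  obtain ⟨a, b, c, hT⟩ := twirl_rhoO hd μO M
  obtain ⟨a', b', c', hT'⟩ := twirl_rhoO hd μO Y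
  obtain ⟨u, v, hU⟩ := twirl_rhoU hd μU M
  have hU' : twirl μU rhoU M = u • 1 + v • swapM d + (0 : ℂ) • Pt d := by simpa using hU
  obtain ⟨s1, s2, -⟩ := traces_of_eq hd0 hT
  obtain ⟨t1, t2, t3⟩ := traces_of_eq hd0 hT'
  obtain ⟨r1, r2, -⟩ := traces_of_eq hd0 hU'
  have trO : ∀ X, (twirl μO rhoO X).trace = X.trace := fun X => by
    simpa using trace_mul_twirl (μ := μO) continuous_rhoO rhoO_mem
      (fun g => Commute.one_left (rhoO g)) X
  have trOF : ∀ X, (swapM d * twirl μO rhoO X).trace = (swapM d * X).trace :=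
    trace_mul_twirl continuous_rhoO rhoO_mem fun g => swapM_comm _
  have trOP : ∀ X, (Pt d * twirl μO rhoO X).trace = (Pt d * X).trace :=
    trace_mul_twirl continuous_rhoO rhoO_mem fun g =>
      Pt_comm (oc_mul_transpose g.2).1 (oc_mul_transpose g.2).2
  have trU : (twirl μU rhoU M).trace = M.trace := by
    simpa using trace_mul_twirl (μ := μU) continuous_rhoU rhoU_mem
      (fun g => Commute.one_left (rhoU g)) M
  have trUF : (swapM d * twirl μU rhoU M).trace = (swapM d * M).trace :=
    trace_mul_twirl continuous_rhoU rhoU_mem (fun g => swapM_comm _) M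
  have y1 : Y.trace = (twirl μO rhoO M).trace := by
    rw [hY, Matrix.trace_mul_comm, ← mul_assoc, k1, one_mul]
  have y2 : (swapM d * Y).trace = (swapM d * twirl μO rhoO M).trace := by
    rw [hY, ← mul_assoc, ← mul_assoc, hF'.eq, Matrix.trace_mul_comm, ← mul_assoc, ← mul_assoc, k1,
      one_mul]
  have y3 : (Pt d * Y).trace = a + b + c * (2 / (d * (d + 1))) := by
    have hFK : Kᴴ * swapM d * K = swapM d := by rw [← hF'.eq, mul_assoc, k2, mul_one]
    have hPF : (Pt d * swapM d).trace = 1 := by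
      rw [Matrix.trace_mul_comm, swapM_mul_Pt, trace_Pt hd0]
    have hPP : (Pt d * (Kᴴ * Pt d * K)).trace = 2 / (d * (d + 1)) := by
      rw [← htr, ← mul_assoc, Matrix.trace_mul_comm]
      simp only [mul_assoc]
    rw [hY, hT]
    simp only [mul_add, add_mul, Matrix.mul_smul, Matrix.smul_mul, mul_one, k2, hFK,
      Matrix.trace_add, Matrix.trace_smul, trace_Pt hd0, hPF, hPP, smul_eq_mul]
  rw [trO] at s1 t1
  rw [trOF] at s2 t2
  rw [trOP, y3] at t3
  rw [y1, trO] at t1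
  rw [y2, trOF] at t2
  rw [trU] at r1
  rw [trUF] at r2
  have hc' : c' = 0 := third_coeff_zero (x := a' - a) (y := b' - b) (c := c) hd
    (by linear_combination s1 - t1) (by linear_combination s2 - t2) (by linear_combination -t3)
  subst hc'
  obtain ⟨hau, hbv⟩ := coeffs_unique (x := a' - u) (y := b' - v) hd
    (by linear_combination r1 - t1) (by linear_combination r2 - t2)
  rw [hT', hU, sub_eq_zero.1 hau, sub_eq_zero.1 hbv]
  simp only [mul_add, add_mul, Matrix.mul_smul, Matrix.smul_mul, mul_one, k1, zero_smul, add_zero,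
    ← hF.eq, mul_assoc]

end TwoFold

/-- If `W` is unitary with `Tr((W⊗W) P_t (W⊗W)† P_t) = 2/(d(d+1))`, then the
unitary 2-fold twirl decomposes into the orthogonal 2-fold twirl followed by
the `W`-conjugated orthogonal 2-fold twirl. -/
theorem unitary_two_twirl_eq_double_orthogonal_twirl (d : ℕ) (hd : 2 ≤ d)
    (W : Matrix (Fin d) (Fin d) ℂ) (hW : W ∈ Matrix.unitaryGroup (Fin d) ℂ)
    (htr : ((W ⊗ₖ W) * Pt d * (W ⊗ₖ W)ᴴ * Pt d).trace = (2 / (d * (d + 1)) : ℂ))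
    (μO : Measure (Matrix.orthogonalGroup (Fin d) ℝ))
    [μO.IsHaarMeasure] [IsProbabilityMeasure μO]
    (μU : Measure (Matrix.unitaryGroup (Fin d) ℂ))
    [μU.IsHaarMeasure] [IsProbabilityMeasure μU]
    (M : Matrix (Fin d × Fin d) (Fin d × Fin d) ℂ) (p q : Fin d × Fin d) :
    (∫ O' : Matrix.orthogonalGroup (Fin d) ℝ,
      ∫ O : Matrix.orthogonalGroup (Fin d) ℝ,
        (((W * oc (O' : Matrix (Fin d) (Fin d) ℝ) * Wᴴ) ⊗ₖ
            (W * oc (O' : Matrix (Fin d) (Fin d) ℝ) * Wᴴ)) *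
          ((oc (O : Matrix (Fin d) (Fin d) ℝ) ⊗ₖ oc (O : Matrix (Fin d) (Fin d) ℝ)) * M *
            (oc (O : Matrix (Fin d) (Fin d) ℝ) ⊗ₖ oc (O : Matrix (Fin d) (Fin d) ℝ))ᴴ) *
          ((W * oc (O' : Matrix (Fin d) (Fin d) ℝ) * Wᴴ) ⊗ₖ
            (W * oc (O' : Matrix (Fin d) (Fin d) ℝ) * Wᴴ))ᴴ) p q ∂μO ∂μO)
    = ∫ U : Matrix.unitaryGroup (Fin d) ℂ,
        (((U : Matrix (Fin d) (Fin d) ℂ) ⊗ₖ (U : Matrix (Fin d) (Fin d) ℂ)) * M *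
          ((U : Matrix (Fin d) (Fin d) ℂ) ⊗ₖ (U : Matrix (Fin d) (Fin d) ℂ))ᴴ) p q ∂μU := by
  have key : ∀ O' O : Matrix.orthogonalGroup (Fin d) ℝ,
      (((W * oc (O' : Matrix (Fin d) (Fin d) ℝ) * Wᴴ) ⊗ₖ
            (W * oc (O' : Matrix (Fin d) (Fin d) ℝ) * Wᴴ)) *
          ((oc (O : Matrix (Fin d) (Fin d) ℝ) ⊗ₖ oc (O : Matrix (Fin d) (Fin d) ℝ)) * M *
            (oc (O : Matrix (Fin d) (Fin d) ℝ) ⊗ₖ oc (O : Matrix (Fin d) (Fin d) ℝ))ᴴ) *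
          ((W * oc (O' : Matrix (Fin d) (Fin d) ℝ) * Wᴴ) ⊗ₖ
            (W * oc (O' : Matrix (Fin d) (Fin d) ℝ) * Wᴴ))ᴴ) p q
        = (((W ⊗ₖ W) * rhoO O' * (W ⊗ₖ W)ᴴ) * (rhoO O * M * (rhoO O)ᴴ) *
            ((W ⊗ₖ W) * rhoO O' * (W ⊗ₖ W)ᴴ)ᴴ) p q := by
    intro O' O
    rw [Matrix.mul_kronecker_mul, Matrix.mul_kronecker_mul, ← Matrix.conjTranspose_kronecker]
    rfl
  simp_rw [key, integral_mul_twirl continuous_rhoO rhoO_mem]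
  have key' : ∀ O' : Matrix.orthogonalGroup (Fin d) ℝ,
      (W ⊗ₖ W) * rhoO O' * (W ⊗ₖ W)ᴴ * twirl μO rhoO M * ((W ⊗ₖ W) * rhoO O' * (W ⊗ₖ W)ᴴ)ᴴ
        = (W ⊗ₖ W) * (rhoO O' * ((W ⊗ₖ W)ᴴ * twirl μO rhoO M * (W ⊗ₖ W)) * (rhoO O')ᴴ)
            * (W ⊗ₖ W)ᴴ := by
    intro O'
    simp only [Matrix.conjTranspose_mul, Matrix.conjTranspose_conjTranspose, mul_assoc]
  simp_rw [key', integral_mul_twirl continuous_rhoO rhoO_mem]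
  rw [double_twirl hd hW htr μO μU M]
  rfl
end
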